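/- arXiv:q-alg/9712043 — 7 statements merged into one kernel-verified Lean document; each statement's English description precedes it below -/
import Mathlib

section
/- Let 0 ≤ α < β < ∞ and let F : [α,β] → ℝ be continuous. Then lim_{ρ → +∞} ρ · β^{-ρ} · ∫_α^β F(x) x^{ρ-1} dx = F(β). -/
open MeasureTheory Set Filter

open scoped Topology

/-!
The weights `x ↦ ρ β^{-ρ} x^{ρ-1}` form an approximate identity at the right endpoint `β`: they are
nonnegative, their mass on `(α, β)` is `1 - (α / β)^ρ → 1`, and since they increase with `x` they
tend to zero uniformly on `[0, c]` for each `c < β`, being at most `c⁻¹ ρ (c / β)^ρ` there.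
-/

lemma tendsto_mul_rpow_atTop_nhds_zero_of_base_lt_one {b : ℝ} (hb₀ : 0 < b) (hb₁ : b < 1) :
    Tendsto (fun ρ : ℝ => ρ * b ^ ρ) atTop (𝓝 0) := by
  refine (tendsto_rpow_mul_exp_neg_mul_atTop_nhds_zero 1 (-Real.log b)
    (neg_pos.2 (Real.log_neg hb₀ hb₁))).congr fun ρ => ?_
  rw [Real.rpow_one, neg_neg, Real.rpow_def_of_pos hb₀]

/-- The kernel `x ↦ ρ β^{-ρ} x^{ρ-1}` of the Mellin transform on `(0, β)`, normalized to have mass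
`1` there. The parameter `ρ` precedes `x` so that `mellinKernel β` is a family of functions. -/
noncomputable def mellinKernel (β ρ x : ℝ) : ℝ :=
  ρ * β ^ (-ρ) * x ^ (ρ - 1)

section mellinKernel

variable {α β ρ x y : ℝ}

lemma measurable_mellinKernel : Measurable (mellinKernel β ρ) := by
  unfold mellinKernel
  fun_prop

lemma mellinKernel_nonneg (hβ : 0 ≤ β) (hρ : 0 ≤ ρ) (hx : 0 ≤ x) : 0 ≤ mellinKernel β ρ x := by
  unfold mellinKernel
  positivity

lemma mellinKernel_le_mellinKernel (hβ : 0 ≤ β) (hρ : 1 ≤ ρ) (hx : 0 ≤ x) (hxy : x ≤ y) :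
    mellinKernel β ρ x ≤ mellinKernel β ρ y :=
  mul_le_mul_of_nonneg_left (Real.rpow_le_rpow hx hxy (by linarith)) (by positivity)

lemma mellinKernel_eq_inv_mul (hβ : 0 ≤ β) (hx : 0 < x) :
    mellinKernel β ρ x = x⁻¹ * (ρ * (x / β) ^ ρ) := by
  rw [mellinKernel, Real.rpow_neg hβ, Real.rpow_sub_one hx.ne', Real.div_rpow hx.le hβ]
  ring

lemma tendsto_mellinKernel_nhds_zero (hx : 0 < x) (hxβ : x < β) :
    Tendsto (fun ρ => mellinKernel β ρ x) atTop (𝓝 0) := by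
  have hβ : 0 < β := hx.trans hxβ
  simp only [mellinKernel_eq_inv_mul hβ.le hx]
  simpa only [mul_zero] using (tendsto_mul_rpow_atTop_nhds_zero_of_base_lt_one
    (div_pos hx hβ) ((div_lt_one hβ).2 hxβ)).const_mul x⁻¹

lemma tendstoUniformlyOn_mellinKernel (hβ : 0 < β) {u : Set ℝ} (hu : u ∈ 𝓝 β) :
    TendstoUniformlyOn (mellinKernel β) 0 atTop (Icc 0 β \ u) := by
  obtain ⟨c, ⟨hc, hcβ⟩, hcu⟩ := exists_Ioc_subset_of_mem_nhds' hu (half_lt_self hβ)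
  have hc₀ : 0 < c := (half_pos hβ).trans_le hc
  rw [Metric.tendstoUniformlyOn_iff]
  intro ε hε
  filter_upwards [(tendsto_mellinKernel_nhds_zero hc₀ hcβ).eventually_lt_const hε,
    eventually_ge_atTop 1] with ρ hcε hρ x ⟨⟨hx₀, hxβ⟩, hxu⟩
  have hxc : x ≤ c := le_of_not_gt fun hcx => hxu (hcu ⟨hcx, hxβ⟩)
  rw [Pi.zero_apply, dist_zero_left,
    Real.norm_of_nonneg (mellinKernel_nonneg hβ.le (by linarith) hx₀)]
  exact (mellinKernel_le_mellinKernel hβ.le hρ hx₀ hxc).trans_lt hcε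

lemma integral_mellinKernel (hα : 0 ≤ α) (hβ : 0 < β) (hρ : 0 < ρ) :
    ∫ x in α..β, mellinKernel β ρ x = 1 - (α / β) ^ ρ := by
  have hβρ : β ^ ρ ≠ 0 := (Real.rpow_pos_of_pos hβ ρ).ne'
  simp only [mellinKernel]
  rw [intervalIntegral.integral_const_mul, integral_rpow (Or.inl (by linarith)), sub_add_cancel,
    Real.rpow_neg hβ.le, Real.div_rpow hα hβ.le]
  field_simp

lemma tendsto_integral_mellinKernel (hα : 0 ≤ α) (hαβ : α < β) :
    Tendsto (fun ρ => ∫ x in α..β, mellinKernel β ρ x) atTop (𝓝 1) := by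
  have hβ : 0 < β := hα.trans_lt hαβ
  have hpow : Tendsto (fun ρ : ℝ => (α / β) ^ ρ) atTop (𝓝 0) :=
    tendsto_rpow_atTop_of_base_lt_one _ (neg_one_lt_zero.trans_le (by positivity))
      ((div_lt_one hβ).2 hαβ)
  have hmass : Tendsto (fun ρ : ℝ => 1 - (α / β) ^ ρ) atTop (𝓝 1) := by
    simpa only [sub_zero] using hpow.const_sub 1
  refine hmass.congr' ?_
  filter_upwards [eventually_gt_atTop 0] with ρ hρ
  exact (integral_mellinKernel hα hβ hρ).symm

end mellinKernel

theorem stmt_4_general {E : Type*} [NormedAddCommGroup E] [NormedSpace ℝ E] [CompleteSpace E]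
    {α β : ℝ} (hα : 0 ≤ α) (hαβ : α < β) {F : ℝ → E} {a : E}
    (hF : IntervalIntegrable F volume α β) (ha : Tendsto F (𝓝[<] β) (𝓝 a)) :
    Tendsto (fun ρ : ℝ => (ρ * β ^ (-ρ)) • ∫ x in α..β, x ^ (ρ - 1) • F x) atTop (𝓝 a) := by
  have hβ : 0 < β := hα.trans_lt hαβ
  have hsub : Ioo α β ⊆ Icc 0 β := fun x hx => ⟨hα.trans hx.1.le, hx.2.le⟩
  have hmass := tendsto_integral_mellinKernel hα hαβ
  simp only [intervalIntegral.integral_of_le hαβ.le, integral_Ioc_eq_integral_Ioo] at hmass ⊢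
  suffices Tendsto (fun ρ => ∫ x in Ioo α β, mellinKernel β ρ x • F x) atTop (𝓝 a) by
    simpa only [mellinKernel, mul_smul, integral_smul] using this
  refine tendsto_setIntegral_peak_smul_of_integrableOn_of_tendsto (x₀ := β) measurableSet_Ioo
    measurableSet_Ioo Subset.rfl self_mem_nhdsWithin measure_Ioo_lt_top.ne ?_ ?_ hmass ?_ ?_ ?_
  · filter_upwards [eventually_ge_atTop 0] with ρ hρ x hx
    exact mellinKernel_nonneg hβ.le hρ (hsub hx).1
  · intro u hu hβu
    exact (tendstoUniformlyOn_mellinKernel hβ (hu.mem_nhds hβu)).mono (sdiff_subset_sdiff_left hsub)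
  · exact Eventually.of_forall fun ρ => measurable_mellinKernel.aestronglyMeasurable
  · exact (intervalIntegrable_iff_integrableOn_Ioo_of_le hαβ.le).1 hF
  · rwa [nhdsWithin_Ioo_eq_nhdsLT hαβ]

/-- For `0 ≤ α < β < ∞` and `F` continuous on `[α,β]`:
`lim_{ρ → +∞} ρ β^{-ρ} ∫_α^β F(x) x^{ρ-1} dx = F(β)`. -/
theorem stmt_4 (α β : ℝ) (hα : 0 ≤ α) (hαβ : α < β) (F : ℝ → ℝ)
    (hF : ContinuousOn F (Icc α β)) :
    Tendsto (fun ρ : ℝ => ρ * β ^ (-ρ) * ∫ x in α..β, F x * x ^ (ρ - 1))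
      atTop (nhds (F β)) := by
  have hFβ : Tendsto F (𝓝[<] β) (𝓝 (F β)) :=
    nhdsWithin_Ioo_eq_nhdsLT hαβ ▸
      ((hF β (right_mem_Icc.2 hαβ.le)).mono Ioo_subset_Icc_self).tendsto
  simpa only [smul_eq_mul, mul_comm (F _)] using
    stmt_4_general hα hαβ (hF.intervalIntegrable_of_Icc hαβ.le) hFβ
end

section
/- Let 0 ≤ α < β < ∞, let b be a natural number, and let F : [α,β] → ℝ be of class C^{b+1} with F^{(k)}(β) = 0 for all k = 0, …, b. Then lim_{ρ → +∞} ρ^{b+2} · β^{-ρ} · ∫_α^β F(x) x^{ρ-1} dx = (-1)^{b+1} F^{(b+1)}(β) · β^{b+1}. -/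
open MeasureTheory Set Filter

open scoped Topology

/-!
The measures `ρ β^{-ρ} x^{ρ-1} dx` on `[α, β]` have mass `1 - (α/β)^ρ → 1` and concentrate at `β`
as `ρ → ∞`, which is the case of no vanishing derivatives. If `F(β) = 0`, integration by parts gives
`ρ ∫ F(x) x^{ρ-1} dx = -α^ρ F(α) - ∫ F'(x) x^ρ dx`, in which the boundary term is exponentially
small compared to `β^ρ`. So each vanishing derivative at `β` costs one factor `-β / ρ`, and one
concludes by induction.
-/

theorem tendsto_rpow_mul_rpow_atTop_nhds_zero_of_base_lt_one (s : ℝ) {r : ℝ} (hr₀ : 0 ≤ r)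
    (hr₁ : r < 1) : Tendsto (fun ρ : ℝ => ρ ^ s * r ^ ρ) atTop (𝓝 0) := by
  rcases hr₀.eq_or_lt with rfl | hr
  · refine tendsto_const_nhds.congr' ?_
    filter_upwards [eventually_gt_atTop 0] with ρ hρ
    rw [Real.zero_rpow hρ.ne', mul_zero]
  · refine (tendsto_rpow_mul_exp_neg_mul_atTop_nhds_zero s (-Real.log r)
      (neg_pos.2 (Real.log_neg hr hr₁))).congr fun ρ => ?_
    rw [Real.rpow_def_of_pos hr, neg_neg]

theorem tendsto_div_add_atTop_nhds_one (a : ℝ) :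
    Tendsto (fun ρ : ℝ => ρ / (ρ + a)) atTop (𝓝 1) := by
  have h : Tendsto (fun ρ : ℝ => 1 - a / (ρ + a)) atTop (𝓝 (1 - 0)) :=
    ((tendsto_atTop_add_const_right atTop a tendsto_id).const_div_atTop a).const_sub 1
  rw [sub_zero] at h
  refine h.congr' ?_
  filter_upwards [eventually_gt_atTop (-a)] with ρ hρ
  have : ρ + a ≠ 0 := by linarith
  field_simp
  ring

/-- The density `ρ β^{-ρ} x^{ρ-1}`, normalized to have mass `1` on `[0, β]`. As `ρ → ∞` it is
an approximate identity at the right endpoint `β`. -/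
noncomputable def edgeKernel (β ρ x : ℝ) : ℝ := ρ * β ^ (-ρ) * x ^ (ρ - 1)

section EdgeKernel

variable {α β : ℝ}

theorem edgeKernel_nonneg {ρ x : ℝ} (hβ : 0 ≤ β) (hρ : 0 ≤ ρ) (hx : 0 ≤ x) :
    0 ≤ edgeKernel β ρ x := by
  unfold edgeKernel
  positivity

theorem measurable_edgeKernel (β ρ : ℝ) : Measurable (edgeKernel β ρ) := by
  unfold edgeKernel
  fun_prop

theorem edgeKernel_le_edgeKernel {ρ x y : ℝ} (hβ : 0 ≤ β) (hρ : 1 ≤ ρ) (hx : 0 ≤ x)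
    (hxy : x ≤ y) : edgeKernel β ρ x ≤ edgeKernel β ρ y := by
  unfold edgeKernel
  gcongr

theorem tendsto_edgeKernel_atTop_nhds_zero {x : ℝ} (hx : 0 < x) (hxβ : x < β) :
    Tendsto (fun ρ => edgeKernel β ρ x) atTop (𝓝 0) := by
  have hβ : 0 < β := hx.trans hxβ
  have h := (tendsto_rpow_mul_rpow_atTop_nhds_zero_of_base_lt_one 1 (div_nonneg hx.le hβ.le)
    ((div_lt_one hβ).2 hxβ)).const_mul x⁻¹
  rw [mul_zero] at h
  refine h.congr fun ρ => ?_
  rw [edgeKernel, Real.rpow_one, Real.rpow_sub_one hx.ne', Real.div_rpow hx.le hβ.le,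
    Real.rpow_neg hβ.le]
  ring

theorem tendstoUniformlyOn_edgeKernel_zero {δ : ℝ} (hδ : 0 < δ) (hδβ : δ < β) :
    TendstoUniformlyOn (edgeKernel β) 0 atTop (Icc 0 δ) := by
  have hβ : 0 ≤ β := (hδ.trans hδβ).le
  rw [Metric.tendstoUniformlyOn_iff]
  intro ε hε
  filter_upwards [(tendsto_edgeKernel_atTop_nhds_zero hδ hδβ).eventually_lt_const hε,
    eventually_ge_atTop 1] with ρ hlt hρ x hx
  rw [Pi.zero_apply, dist_zero_left, Real.norm_of_nonneg
    (edgeKernel_nonneg hβ (zero_le_one.trans hρ) hx.1)]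
  exact (edgeKernel_le_edgeKernel hβ hρ hx.1 hx.2).trans_lt hlt

theorem integral_edgeKernel {ρ : ℝ} (hα : 0 ≤ α) (hβ : 0 < β) (hρ : 0 < ρ) :
    ∫ x in α..β, edgeKernel β ρ x = 1 - (α / β) ^ ρ := by
  have hβρ : β ^ ρ ≠ 0 := (Real.rpow_pos_of_pos hβ ρ).ne'
  simp only [edgeKernel]
  rw [intervalIntegral.integral_const_mul, integral_rpow (Or.inl (by linarith)), sub_add_cancel,
    Real.div_rpow hα hβ.le, Real.rpow_neg hβ.le]
  field_simp

theorem tendsto_integral_edgeKernel (hα : 0 ≤ α) (hαβ : α < β) :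
    Tendsto (fun ρ => ∫ x in α..β, edgeKernel β ρ x) atTop (𝓝 1) := by
  have hβ : 0 < β := hα.trans_lt hαβ
  have hratio : -1 < α / β := neg_one_lt_zero.trans_le (div_nonneg hα hβ.le)
  have h := (tendsto_rpow_atTop_of_base_lt_one _ hratio ((div_lt_one hβ).2 hαβ)).const_sub 1
  rw [sub_zero] at h
  refine h.congr' ?_
  filter_upwards [eventually_gt_atTop 0] with ρ hρ
  exact (integral_edgeKernel hα hβ hρ).symm

theorem tendsto_integral_edgeKernel_smul {E : Type*} [NormedAddCommGroup E] [NormedSpace ℝ E]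
    [CompleteSpace E] {G : ℝ → E} {c : E} (hα : 0 ≤ α) (hαβ : α < β)
    (hG : IntervalIntegrable G volume α β) (hc : Tendsto G (𝓝[Ioc α β] β) (𝓝 c)) :
    Tendsto (fun ρ => ∫ x in α..β, edgeKernel β ρ x • G x) atTop (𝓝 c) := by
  have hβ : 0 < β := hα.trans_lt hαβ
  have hmass := tendsto_integral_edgeKernel hα hαβ
  have hpeak : ∀ u : Set ℝ, IsOpen u → β ∈ u →
      TendstoUniformlyOn (edgeKernel β) 0 atTop (Ioc α β \ u) := by
    intro u hu hβu
    obtain ⟨δ, ⟨hδ, hδβ⟩, hδu⟩ :=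
      exists_Ioc_subset_of_mem_nhds' (hu.mem_nhds hβu) (half_lt_self hβ)
    refine (tendstoUniformlyOn_edgeKernel_zero ((half_pos hβ).trans_le hδ) hδβ).mono ?_
    rintro x ⟨hx, hxu⟩
    exact ⟨hα.trans hx.1.le, not_lt.1 fun hδx => hxu (hδu ⟨hδx, hx.2⟩)⟩
  simp only [intervalIntegral.integral_of_le hαβ.le] at hmass ⊢
  refine tendsto_setIntegral_peak_smul_of_integrableOn_of_tendsto measurableSet_Ioc
    measurableSet_Ioc Subset.rfl self_mem_nhdsWithin measure_Ioc_lt_top.ne ?_ hpeak hmass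
    (Eventually.of_forall fun ρ => (measurable_edgeKernel β ρ).aestronglyMeasurable) hG.1 hc
  filter_upwards [eventually_ge_atTop 0] with ρ hρ x hx
  exact edgeKernel_nonneg hβ.le hρ (hα.trans hx.1.le)

end EdgeKernel

/-- The Mellin transform at a real argument `ρ` of a vector-valued function `F` on the interval
`(α, β)`. -/
noncomputable def intervalMellin {E : Type*} [NormedAddCommGroup E] [NormedSpace ℝ E]
    (α β : ℝ) (F : ℝ → E) (ρ : ℝ) : E :=
  ∫ x in α..β, x ^ (ρ - 1) • F x

section IntervalMellin

variable {E : Type*} [NormedAddCommGroup E] [NormedSpace ℝ E] [CompleteSpace E] {α β : ℝ}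
  {F F' : ℝ → E}

theorem tendsto_smul_intervalMellin {c : E} (hα : 0 ≤ α) (hαβ : α < β)
    (hF : IntervalIntegrable F volume α β) (hc : Tendsto F (𝓝[Ioc α β] β) (𝓝 c)) :
    Tendsto (fun ρ => (ρ * β ^ (-ρ)) • intervalMellin α β F ρ) atTop (𝓝 c) := by
  refine (tendsto_integral_edgeKernel_smul hα hαβ hF hc).congr fun ρ => ?_
  simp only [intervalMellin, edgeKernel, mul_smul, intervalIntegral.integral_smul]

theorem smul_intervalMellin_eq_sub (hα : 0 ≤ α) (hαβ : α ≤ β) (hF : ContinuousOn F (Icc α β))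
    (hderiv : ∀ x ∈ Ioo α β, HasDerivAt F (F' x) x) (hF' : IntervalIntegrable F' volume α β)
    {ρ : ℝ} (hρ : 0 < ρ) :
    ρ • intervalMellin α β F ρ =
      β ^ ρ • F β - α ^ ρ • F α - intervalMellin α β F' (ρ + 1) := by
  have hparts : ∫ x in α..β, x ^ ρ • F' x =
      β ^ ρ • F β - α ^ ρ • F α - ∫ x in α..β, (ρ * x ^ (ρ - 1)) • F x := by
    refine intervalIntegral.integral_smul_deriv_eq_deriv_smul_of_hasDerivAt
      (Real.continuous_rpow_const hρ.le).continuousOn (by rwa [uIcc_of_le hαβ])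
      (fun x hx => ?_) (by rwa [min_eq_left hαβ, max_eq_right hαβ])
      ((intervalIntegral.intervalIntegrable_rpow' (by linarith)).const_mul ρ) hF'
    rw [min_eq_left hαβ] at hx
    exact Real.hasDerivAt_rpow_const (Or.inl (hα.trans_lt hx.1).ne')
  simp only [mul_smul, intervalIntegral.integral_smul] at hparts
  simp only [intervalMellin, add_sub_cancel_right, hparts, sub_sub_cancel]

theorem pow_succ_smul_intervalMellin_eq (m : ℕ) (hα : 0 ≤ α) (hαβ : α < β)
    (hF : ContinuousOn F (Icc α β)) (hderiv : ∀ x ∈ Ioo α β, HasDerivAt F (F' x) x)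
    (hF' : IntervalIntegrable F' volume α β) (hFβ : F β = 0) {ρ : ℝ} (hρ : 0 < ρ) :
    (ρ ^ (m + 1) * β ^ (-ρ)) • intervalMellin α β F ρ =
      -((ρ ^ m * (α / β) ^ ρ) • F α) - (β * (ρ / (ρ + 1)) ^ m) •
        (((ρ + 1) ^ m * β ^ (-(ρ + 1))) • intervalMellin α β F' (ρ + 1)) := by
  have hβ : 0 < β := hα.trans_lt hαβ
  have hboundary : (α / β) ^ ρ = β ^ (-ρ) * α ^ ρ := by
    rw [Real.div_rpow hα hβ.le, Real.rpow_neg hβ.le, div_eq_inv_mul]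
  have hshift : β * (ρ / (ρ + 1)) ^ m * ((ρ + 1) ^ m * β ^ (-(ρ + 1))) = ρ ^ m * β ^ (-ρ) := by
    rw [neg_add, ← sub_eq_add_neg, Real.rpow_sub_one hβ.ne', div_pow]
    field_simp
  calc (ρ ^ (m + 1) * β ^ (-ρ)) • intervalMellin α β F ρ
      = (ρ ^ m * β ^ (-ρ)) • (ρ • intervalMellin α β F ρ) := by module
    _ = (ρ ^ m * β ^ (-ρ)) • (-(α ^ ρ • F α) - intervalMellin α β F' (ρ + 1)) := by
        rw [smul_intervalMellin_eq_sub hα hαβ.le hF hderiv hF' hρ, hFβ, smul_zero, zero_sub]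
    _ = _ := by
        rw [smul_smul, hshift, hboundary]
        module

theorem tendsto_pow_succ_smul_intervalMellin (m : ℕ) {c : E} (hα : 0 ≤ α) (hαβ : α < β)
    (hF : ContinuousOn F (Icc α β)) (hderiv : ∀ x ∈ Ioo α β, HasDerivAt F (F' x) x)
    (hF' : IntervalIntegrable F' volume α β) (hFβ : F β = 0)
    (hc : Tendsto (fun ρ => (ρ ^ m * β ^ (-ρ)) • intervalMellin α β F' ρ) atTop (𝓝 c)) :
    Tendsto (fun ρ => (ρ ^ (m + 1) * β ^ (-ρ)) • intervalMellin α β F ρ) atTop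
      (𝓝 (-(β • c))) := by
  have hβ : 0 < β := hα.trans_lt hαβ
  have hboundary : Tendsto (fun ρ : ℝ => (ρ ^ m * (α / β) ^ ρ) • F α) atTop (𝓝 0) := by
    simpa only [Real.rpow_natCast, zero_smul] using
      (tendsto_rpow_mul_rpow_atTop_nhds_zero_of_base_lt_one m (div_nonneg hα hβ.le)
        ((div_lt_one hβ).2 hαβ)).smul_const (F α)
  have hfactor : Tendsto (fun ρ : ℝ => β * (ρ / (ρ + 1)) ^ m) atTop (𝓝 β) := by
    simpa only [one_pow, mul_one] using ((tendsto_div_add_atTop_nhds_one 1).pow m).const_mul β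
  have hshift := hc.comp (tendsto_atTop_add_const_right atTop (1 : ℝ) tendsto_id)
  have hsum := hboundary.neg.sub (hfactor.smul hshift)
  rw [neg_zero, zero_sub] at hsum
  refine hsum.congr' ?_
  filter_upwards [eventually_gt_atTop 0] with ρ hρ
  exact (pow_succ_smul_intervalMellin_eq m hα hαβ hF hderiv hF' hFβ hρ).symm

end IntervalMellin

theorem stmt_5_general {E : Type*} [NormedAddCommGroup E] [NormedSpace ℝ E] [CompleteSpace E]
    {α β : ℝ} (hα : 0 ≤ α) (hαβ : α < β) (n : ℕ) {F : ℝ → E}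
    (hF : ContDiffOn ℝ n F (Icc α β))
    (hvanish : ∀ k < n, iteratedDerivWithin k F (Icc α β) β = 0) :
    Tendsto (fun ρ => (ρ ^ (n + 1) * β ^ (-ρ)) • intervalMellin α β F ρ) atTop
      (𝓝 (((-1 : ℝ) ^ n * β ^ n) • iteratedDerivWithin n F (Icc α β) β)) := by
  induction n generalizing F with
  | zero =>
    have hlim : Tendsto F (𝓝[Ioc α β] β) (𝓝 (F β)) :=
      (hF.continuousOn β (right_mem_Icc.2 hαβ.le)).mono Ioc_subset_Icc_self
    simpa using tendsto_smul_intervalMellin hα hαβ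
      (hF.continuousOn.intervalIntegrable_of_Icc hαβ.le) hlim
  | succ n ih =>
    rw [Nat.cast_succ] at hF
    obtain ⟨hdiff, -, hF'⟩ := (contDiffOn_succ_iff_derivWithin (uniqueDiffOn_Icc hαβ)).1 hF
    have hderiv : ∀ x ∈ Ioo α β, HasDerivAt F (derivWithin F (Icc α β) x) x := fun x hx =>
      (hdiff x (Ioo_subset_Icc_self hx)).hasDerivWithinAt.hasDerivAt (Icc_mem_nhds hx.1 hx.2)
    have hFβ : F β = 0 := by simpa using hvanish 0 n.succ_pos
    have hlim := ih hF' fun k hk => by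
      rw [← iteratedDerivWithin_succ']
      exact hvanish (k + 1) (Nat.succ_lt_succ hk)
    rw [← iteratedDerivWithin_succ'] at hlim
    convert tendsto_pow_succ_smul_intervalMellin (n + 1) hα hαβ hF.continuousOn hderiv
      (hF'.continuousOn.intervalIntegrable_of_Icc hαβ.le) hFβ hlim using 2
    module

/-- For `0 ≤ α < β < ∞`, `b : ℕ`, and `F` of class `C^{b+1}` on `[α,β]` with
`F^{(k)}(β) = 0` for `k = 0, …, b`:
`lim_{ρ → +∞} ρ^{b+2} β^{-ρ} ∫_α^β F(x) x^{ρ-1} dx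
  = (-1)^{b+1} F^{(b+1)}(β) β^{b+1}`. -/
theorem stmt_5 (α β : ℝ) (hα : 0 ≤ α) (hαβ : α < β) (b : ℕ) (F : ℝ → ℝ)
    (hF : ContDiffOn ℝ (b + 1 : ℕ) F (Icc α β))
    (hvanish : ∀ k : ℕ, k ≤ b → iteratedDerivWithin k F (Icc α β) β = 0) :
    Tendsto
      (fun ρ : ℝ => ρ ^ (b + 2) * β ^ (-ρ) * ∫ x in α..β, F x * x ^ (ρ - 1))
      atTop
      (nhds ((-1 : ℝ) ^ (b + 1) * iteratedDerivWithin (b + 1) F (Icc α β) β *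
        β ^ (b + 1))) := by
  simpa only [intervalMellin, smul_eq_mul, mul_comm (F _), mul_right_comm] using
    stmt_5_general hα hαβ (b + 1) hF fun k hk => hvanish k (Nat.lt_succ_iff.1 hk)
end

section
/- Let 0 < α < β < ∞ and let F : [α,β] → ℝ be continuous. Then lim_{ρ → -∞} (-ρ) · α^{-ρ} · ∫_α^β F(x) x^{ρ-1} dx = F(α). -/
open MeasureTheory Set Filter

/-!
The weights `(-ρ) α ^ (-ρ) x ^ (ρ - 1)` form an approximate identity at `α` from the right as
`ρ → -∞`: they are nonnegative, their mass on `(α, c]` is exactly `1 - (c / α) ^ ρ → 1`, and on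
`[c, ∞)` they are at most `(-ρ) (c / α) ^ ρ / c → 0`. If `F` is integrable only against some power
of `x`, that power is moved from the weight to `F`, which changes the normalization by a convergent
factor.
-/

open scoped Topology

/-- The normalized Mellin weight `(-ρ) α ^ (-ρ) x ^ (ρ - 1)`, which concentrates at the right of
`α` as `ρ → -∞`. Integrating a function against it gives its Mellin transform at `ρ`, divided by
the expected edge behaviour `|ρ|⁻¹ α ^ ρ`. -/
noncomputable def mellinEdgeKernel (α ρ x : ℝ) : ℝ :=
  -ρ * α ^ (-ρ) * x ^ (ρ - 1)

section Kernel

variable {α ρ x c : ℝ}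

lemma tendsto_neg_mul_rpow_atBot_nhds_zero {b : ℝ} (hb : 1 < b) :
    Tendsto (fun ρ : ℝ => -ρ * b ^ ρ) atBot (𝓝 0) := by
  have exp_decay := (tendsto_rpow_mul_exp_neg_mul_atTop_nhds_zero 1 _ (Real.log_pos hb)).comp
    tendsto_neg_atBot_atTop
  refine exp_decay.congr fun ρ => ?_
  simp only [Function.comp_apply, Real.rpow_one, neg_mul_neg,
    Real.rpow_def_of_pos (zero_lt_one.trans hb)]

lemma rpow_neg_mul_rpow_eq_div_rpow (hα : 0 ≤ α) (hc : 0 ≤ c) (ρ : ℝ) :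
    α ^ (-ρ) * c ^ ρ = (c / α) ^ ρ := by
  rw [Real.div_rpow hc hα, Real.rpow_neg hα, inv_mul_eq_div]

lemma measurable_mellinEdgeKernel (α ρ : ℝ) : Measurable (mellinEdgeKernel α ρ) := by
  unfold mellinEdgeKernel
  fun_prop

lemma mellinEdgeKernel_nonneg (hα : 0 ≤ α) (hρ : ρ ≤ 0) (hx : 0 ≤ x) :
    0 ≤ mellinEdgeKernel α ρ x :=
  mul_nonneg (mul_nonneg (neg_nonneg.2 hρ) (Real.rpow_nonneg hα _)) (Real.rpow_nonneg hx _)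

lemma mellinEdgeKernel_antitoneOn (hα : 0 ≤ α) (hρ : ρ ≤ 0) :
    AntitoneOn (mellinEdgeKernel α ρ) (Ioi 0) := fun _ hx _ _ hxy =>
  mul_le_mul_of_nonneg_left (Real.rpow_le_rpow_of_nonpos hx hxy (by linarith))
    (mul_nonneg (neg_nonneg.2 hρ) (Real.rpow_nonneg hα _))

lemma mellinEdgeKernel_eq_div_rpow (hα : 0 ≤ α) (hx : 0 < x) (ρ : ℝ) :
    mellinEdgeKernel α ρ x = -ρ * (x / α) ^ ρ / x := by
  rw [mellinEdgeKernel, Real.rpow_sub_one hx.ne', ← rpow_neg_mul_rpow_eq_div_rpow hα hx.le]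
  ring

lemma tendsto_mellinEdgeKernel_atBot (hα : 0 < α) (hc : α < c) :
    Tendsto (fun ρ => mellinEdgeKernel α ρ c) atBot (𝓝 0) := by
  simp only [mellinEdgeKernel_eq_div_rpow hα.le (hα.trans hc)]
  simpa only [zero_div] using
    (tendsto_neg_mul_rpow_atBot_nhds_zero ((one_lt_div hα).2 hc)).div_const c

lemma tendstoUniformlyOn_mellinEdgeKernel (hα : 0 < α) (hc : α < c) :
    TendstoUniformlyOn (mellinEdgeKernel α) 0 atBot (Ici c) := by
  rw [Metric.tendstoUniformlyOn_iff]
  intro ε hε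
  filter_upwards [eventually_le_atBot 0,
    (tendsto_mellinEdgeKernel_atBot hα hc).eventually_lt_const hε] with ρ hρ hlt x hx
  have hc₀ : 0 < c := hα.trans hc
  have hx₀ : 0 < x := hc₀.trans_le hx
  rw [Pi.zero_apply, dist_zero_left,
    Real.norm_of_nonneg (mellinEdgeKernel_nonneg hα.le hρ hx₀.le)]
  exact (mellinEdgeKernel_antitoneOn hα.le hρ hc₀ hx₀ hx).trans_lt hlt

lemma integral_mellinEdgeKernel (hα : 0 < α) (hc : 0 < c) (hρ : ρ ≠ 0) :
    ∫ x in α..c, mellinEdgeKernel α ρ x = 1 - (c / α) ^ ρ := by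
  have zero_notMem : (0 : ℝ) ∉ uIcc α c := notMem_uIcc_of_lt hα hc
  have exponent_ne : ρ - 1 ≠ -1 := by contrapose hρ; linarith
  have hα_cancel : α ^ (-ρ) * α ^ ρ = 1 := by
    rw [rpow_neg_mul_rpow_eq_div_rpow hα.le hα.le, div_self hα.ne', Real.one_rpow]
  simp only [mellinEdgeKernel]
  rw [intervalIntegral.integral_const_mul, integral_rpow (.inr ⟨exponent_ne, zero_notMem⟩),
    sub_add_cancel]
  calc -ρ * α ^ (-ρ) * ((c ^ ρ - α ^ ρ) / ρ)
      = α ^ (-ρ) * α ^ ρ - α ^ (-ρ) * c ^ ρ := by field_simp; ring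
    _ = 1 - (c / α) ^ ρ := by rw [hα_cancel, rpow_neg_mul_rpow_eq_div_rpow hα.le hc.le]

lemma tendsto_integral_mellinEdgeKernel (hα : 0 < α) (hc : α < c) :
    Tendsto (fun ρ => ∫ x in α..c, mellinEdgeKernel α ρ x) atBot (𝓝 1) := by
  have mass_tendsto :=
    (tendsto_rpow_atBot_of_base_gt_one _ ((one_lt_div hα).2 hc)).const_sub 1
  rw [sub_zero] at mass_tendsto
  refine mass_tendsto.congr' ?_
  filter_upwards [eventually_ne_atBot 0] with ρ hρ
  exact (integral_mellinEdgeKernel hα (hα.trans hc) hρ).symm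

lemma mellinEdgeKernel_eq_mul_sub (hα : 0 < α) (hx : 0 < x) {r : ℝ} (hr : ρ ≠ r) :
    mellinEdgeKernel α ρ x =
      ρ / (ρ - r) * α ^ (-r) * (mellinEdgeKernel α (ρ - r) x * x ^ r) := by
  have hα_split : α ^ (-ρ) = α ^ (-r) * α ^ (-(ρ - r)) := by
    rw [← Real.rpow_add hα]; congr 1; ring
  have hx_split : x ^ (ρ - 1) = x ^ (ρ - r - 1) * x ^ r := by
    rw [← Real.rpow_add hx]; congr 1; ring
  have hsub : ρ - r ≠ 0 := sub_ne_zero.2 hr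
  simp only [mellinEdgeKernel, hα_split, hx_split]
  field_simp

end Kernel

lemma tendsto_div_sub_const_atBot (r : ℝ) :
    Tendsto (fun ρ : ℝ => ρ / (ρ - r)) atBot (𝓝 1) := by
  have hlim : Tendsto (fun ρ : ℝ => 1 + r / (ρ - r)) atBot (𝓝 (1 + 0)) :=
    ((tendsto_atBot_add_const_right _ (-r) tendsto_id).const_div_atBot r).const_add 1
  rw [add_zero] at hlim
  refine hlim.congr' ?_
  filter_upwards [eventually_ne_atBot r] with ρ hρ
  have hsub : ρ - r ≠ 0 := sub_ne_zero.2 hρ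
  field_simp
  ring

section Edge

variable {E : Type*} [NormedAddCommGroup E] [NormedSpace ℝ E] [CompleteSpace E]
  {α : ℝ} {s : Set ℝ} {F : ℝ → E} {a : E}

lemma tendsto_setIntegral_mellinEdgeKernel_smul (hα : 0 < α) (hs : MeasurableSet s)
    (hsα : s ⊆ Ioi α) (hs_nhds : s ∈ 𝓝[>] α) (hF : IntegrableOn F s)
    (hFα : Tendsto F (𝓝[>] α) (𝓝 a)) :
    Tendsto (fun ρ => ∫ x in s, mellinEdgeKernel α ρ x • F x) atBot (𝓝 a) := by
  obtain ⟨c, hc, hcs⟩ := mem_nhdsGT_iff_exists_Ioc_subset.1 hs_nhds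
  refine tendsto_setIntegral_peak_smul_of_integrableOn_of_tendsto hs measurableSet_Ioc hcs
    (nhdsWithin_mono α hsα (Ioc_mem_nhdsGT hc)) measure_Ioc_lt_top.ne ?nonneg ?uniform ?mass
    (.of_forall fun ρ => (measurable_mellinEdgeKernel α ρ).aestronglyMeasurable)
    hF (hFα.mono_left (nhdsWithin_mono α hsα))
  case nonneg =>
    filter_upwards [eventually_le_atBot 0] with ρ hρ x hx
    exact mellinEdgeKernel_nonneg hα.le hρ (hα.trans (hsα hx)).le
  case uniform =>
    intro u hu hαu
    obtain ⟨d, hd, hdu⟩ := mem_nhdsGE_iff_exists_Ico_subset.1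
      (mem_nhdsWithin_of_mem_nhds (hu.mem_nhds hαu))
    refine (tendstoUniformlyOn_mellinEdgeKernel hα hd).mono fun x hx => ?_
    exact not_lt.1 fun hxd => hx.2 (hdu ⟨(hsα hx.1).le, hxd⟩)
  case mass =>
    simpa only [intervalIntegral.integral_of_le (le_of_lt hc)] using
      tendsto_integral_mellinEdgeKernel hα hc

theorem stmt_6_general (hα : 0 < α) (hs : MeasurableSet s) (hsα : s ⊆ Ioi α)
    (hs_nhds : s ∈ 𝓝[>] α) {ρ₀ : ℝ} (hF : IntegrableOn (fun x => x ^ (ρ₀ - 1) • F x) s)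
    (hFα : Tendsto F (𝓝[>] α) (𝓝 a)) :
    Tendsto (fun ρ : ℝ => (-ρ * α ^ (-ρ)) • ∫ x in s, x ^ (ρ - 1) • F x) atBot (𝓝 a) := by
  set r := ρ₀ - 1
  have weighted_limit : Tendsto (fun x => x ^ r • F x) (𝓝[>] α) (𝓝 (α ^ r • a)) :=
    ((Real.continuousAt_rpow_const α r (.inl hα.ne')).tendsto.mono_left
      nhdsWithin_le_nhds).smul hFα
  have edge_limit := (tendsto_setIntegral_mellinEdgeKernel_smul hα hs hsα hs_nhds hF
    weighted_limit).comp (tendsto_atBot_add_const_right _ (-r) tendsto_id)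
  have factor_limit := (tendsto_div_sub_const_atBot r).mul_const (α ^ (-r))
  have limit_eq : (1 * α ^ (-r)) • α ^ r • a = a := by
    rw [one_mul, smul_smul, ← Real.rpow_add hα, neg_add_cancel, Real.rpow_zero, one_smul]
  rw [← limit_eq]
  refine (factor_limit.smul edge_limit).congr' ?_
  filter_upwards [eventually_ne_atBot r] with ρ hρ
  simp only [Function.comp_apply, id, ← sub_eq_add_neg]
  rw [← integral_smul, ← integral_smul]
  refine setIntegral_congr_fun hs fun x hx => ?_
  simp only [smul_smul]
  rw [← mellinEdgeKernel_eq_mul_sub hα (hα.trans (hsα hx)) hρ, mellinEdgeKernel]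

end Edge

/-- For `0 < α < β < ∞` and `F` continuous on `[α,β]`:
`lim_{ρ → -∞} (-ρ) α^{-ρ} ∫_α^β F(x) x^{ρ-1} dx = F(α)`. -/
theorem stmt_6 (α β : ℝ) (hα : 0 < α) (hαβ : α < β) (F : ℝ → ℝ)
    (hF : ContinuousOn F (Icc α β)) :
    Tendsto (fun ρ : ℝ => (-ρ) * α ^ (-ρ) * ∫ x in α..β, F x * x ^ (ρ - 1))
      atBot (nhds (F α)) := by
  have hF_int : IntegrableOn F (Ioc α β) := hF.integrableOn_Icc.mono_set Ioc_subset_Icc_self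
  have hF_lim : Tendsto F (𝓝[>] α) (𝓝 (F α)) :=
    (hF.continuousWithinAt (left_mem_Icc.2 hαβ.le)).mono_of_mem_nhdsWithin (Icc_mem_nhdsGT hαβ)
  simpa only [intervalIntegral.integral_of_le hαβ.le, smul_eq_mul, mul_comm (F _)] using
    stmt_6_general hα measurableSet_Ioc Ioc_subset_Ioi_self (Ioc_mem_nhdsGT hαβ) (ρ₀ := 1)
      (by simpa using hF_int) hF_lim
end

section
/- Let 0 < α < β < ∞ and let F : [α,β] → [0,∞) be continuous with F(α) > 0 and F(β) > 0. Define F̂(ρ) = ∫_α^β F(x) x^{ρ-1} dx and ψ(ρ) = F̂(ρ+1)/F̂(ρ). Then lim_{ρ → +∞} ψ(ρ) = β and lim_{ρ → -∞} ψ(ρ) = α. -/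
open MeasureTheory Set Filter

/-!
`F̂ ρ` is the moment of order `ρ - 1` of the measure `F(x) dx`, so only the measure matters. Let `μ`
be a finite measure on `[0, b]` with `b` in its support, and let `s ≥ 0`. Clearly
`∫ x ^ (s + 1) ∂μ ≤ b * ∫ x ^ s ∂μ`. For `0 ≤ c < d < b`, the integral of `(x - c) * x ^ s` is at
least `(d - c) * d ^ s * μ [d, ∞) - c * c ^ s * μ ℝ`, which is positive for large `s` because
`(c / d) ^ s → 0`. So the ratio of consecutive moments is eventually between `c` and `b`. The limit
at `-∞` is the limit at `+∞` for the image of `μ` under `x ↦ x⁻¹`, inverted.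
-/

open scoped Topology ENNReal

section RpowMoments

variable {μ : Measure ℝ} [IsFiniteMeasure μ] {b s : ℝ}

lemma integrable_rpow_of_ae_mem_Icc (hμ : ∀ᵐ x ∂μ, x ∈ Icc 0 b) (hs : 0 ≤ s) :
    Integrable (fun x ↦ x ^ s) μ := by
  refine .of_bound (by fun_prop) (b ^ s) ?_
  filter_upwards [hμ] with x hx
  rw [Real.norm_of_nonneg (Real.rpow_nonneg hx.1 s)]
  exact Real.rpow_le_rpow hx.1 hx.2 hs

lemma integral_rpow_add_one_le (hμ : ∀ᵐ x ∂μ, x ∈ Icc 0 b) (hs : 0 ≤ s) :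
    ∫ x, x ^ (s + 1) ∂μ ≤ b * ∫ x, x ^ s ∂μ := by
  rw [← integral_const_mul]
  refine integral_mono_ae (integrable_rpow_of_ae_mem_Icc hμ (by positivity))
    ((integrable_rpow_of_ae_mem_Icc hμ hs).const_mul b) ?_
  filter_upwards [hμ] with x hx
  rw [Real.rpow_add_one' hx.1 (by positivity), mul_comm]
  exact mul_le_mul_of_nonneg_right hx.2 (Real.rpow_nonneg hx.1 s)

lemma rpow_add_one_sub_add_nonneg {x c : ℝ} (hx : 0 ≤ x) (hc : 0 ≤ c) (hs : 0 ≤ s) :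
    0 ≤ x ^ (s + 1) - c * x ^ s + c * c ^ s := by
  rw [Real.rpow_add_one' hx (by positivity)]
  have hxs := Real.rpow_nonneg hx s
  rcases le_total c x with hcx | hxc
  · nlinarith [Real.rpow_nonneg hc s]
  · nlinarith [Real.rpow_le_rpow hx hxc hs]

-- Markov's inequality for `(x - c) * x ^ s + c * c ^ s`, which is nonnegative for `x ≥ 0`.
lemma mul_measureReal_Ici_le_integral_rpow_sub {c d : ℝ} (hμ : ∀ᵐ x ∂μ, x ∈ Icc 0 b)
    (hs : 0 ≤ s) (hc : 0 ≤ c) (hcd : c ≤ d) :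
    (d - c) * d ^ s * μ.real (Ici d) ≤
      ∫ x, x ^ (s + 1) ∂μ - c * ∫ x, x ^ s ∂μ + c * c ^ s * μ.real univ := by
  set f : ℝ → ℝ := fun x ↦ x ^ (s + 1) - c * x ^ s + c * c ^ s
  have hint := integrable_rpow_of_ae_mem_Icc hμ hs
  have hint' := integrable_rpow_of_ae_mem_Icc hμ (s := s + 1) (by positivity)
  have hf_nonneg : 0 ≤ᵐ[μ] f := by
    filter_upwards [hμ] with x hx using rpow_add_one_sub_add_nonneg hx.1 hc hs
  have hint_sub : Integrable (fun x ↦ x ^ (s + 1) - c * x ^ s) μ := hint'.sub (hint.const_mul c)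
  have hf_int : Integrable f μ := hint_sub.add (integrable_const _)
  have hf_ge : Ici d ⊆ {x | (d - c) * d ^ s ≤ f x} := by
    intro x (hx : d ≤ x)
    have hd : 0 ≤ d := hc.trans hcd
    calc (d - c) * d ^ s ≤ (x - c) * x ^ s := by gcongr; linarith
      _ = x ^ (s + 1) - c * x ^ s := by
        rw [Real.rpow_add_one' (hd.trans hx) (by positivity)]; ring
      _ ≤ f x := le_add_of_nonneg_right (by positivity)
  calc (d - c) * d ^ s * μ.real (Ici d)
      ≤ (d - c) * d ^ s * μ.real {x | (d - c) * d ^ s ≤ f x} := by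
        have := Real.rpow_nonneg (hc.trans hcd) s
        have := sub_nonneg.2 hcd
        gcongr
        finiteness
    _ ≤ ∫ x, f x ∂μ := mul_meas_ge_le_integral_of_nonneg hf_nonneg hf_int _
    _ = _ := by
      rw [integral_add hint_sub (integrable_const _),
        integral_sub hint' (hint.const_mul c), integral_const_mul, integral_const, smul_eq_mul,
        mul_comm (μ.real univ)]

lemma eventually_mul_rpow_lt_mul_rpow {c d p : ℝ} (hc : 0 ≤ c) (hcd : c < d) (hp : 0 < p)
    (q : ℝ) : ∀ᶠ s : ℝ in atTop, q * c ^ s < p * d ^ s := by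
  have hd : 0 < d := hc.trans_lt hcd
  have hlim : Tendsto (fun s : ℝ ↦ q * (c / d) ^ s) atTop (𝓝 (q * 0)) :=
    (tendsto_rpow_atTop_of_base_lt_one _ (by linarith [div_nonneg hc hd.le])
      ((div_lt_one hd).2 hcd)).const_mul q
  rw [mul_zero] at hlim
  filter_upwards [hlim.eventually_lt_const hp] with s hs
  rwa [Real.div_rpow hc hd.le, ← mul_div_assoc, div_lt_iff₀ (Real.rpow_pos_of_pos hd s)] at hs

lemma eventually_mul_integral_rpow_lt {c : ℝ} (hμ : ∀ᵐ x ∂μ, x ∈ Icc 0 b)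
    (hb : b ∈ μ.support) (hc : 0 ≤ c) (hcb : c < b) :
    ∀ᶠ s : ℝ in atTop, c * ∫ x, x ^ s ∂μ < ∫ x, x ^ (s + 1) ∂μ := by
  obtain ⟨d, hcd, hdb⟩ := exists_between hcb
  have hmass : 0 < μ.real (Ici d) :=
    ENNReal.toReal_pos ((Measure.mem_support_iff_forall b).1 hb _ (Ici_mem_nhds hdb)).ne'
      (by finiteness)
  filter_upwards [eventually_ge_atTop 0, eventually_mul_rpow_lt_mul_rpow hc hcd
    (mul_pos (sub_pos.2 hcd) hmass) (c * μ.real univ)] with s hs htail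
  linarith [mul_measureReal_Ici_le_integral_rpow_sub hμ hs hc hcd.le]

theorem tendsto_integral_rpow_add_one_div_atTop (hb₀ : 0 < b) (hμ : ∀ᵐ x ∂μ, x ∈ Icc 0 b)
    (hb : b ∈ μ.support) :
    Tendsto (fun s : ℝ ↦ (∫ x, x ^ (s + 1) ∂μ) / ∫ x, x ^ s ∂μ) atTop (𝓝 b) := by
  have hpos : ∀ᶠ s : ℝ in atTop, 0 < ∫ x, x ^ s ∂μ := by
    filter_upwards [eventually_ge_atTop 0, eventually_mul_integral_rpow_lt hμ hb le_rfl hb₀]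
      with s hs hlt
    rw [zero_mul] at hlt
    exact pos_of_mul_pos_right (hlt.trans_le (integral_rpow_add_one_le hμ hs)) hb₀.le
  refine tendsto_order.2 ⟨fun c hcb ↦ ?_, fun c hbc ↦ ?_⟩
  · filter_upwards [hpos, eventually_mul_integral_rpow_lt hμ hb (le_max_right c 0)
      (max_lt hcb hb₀)] with s hs hlt
    exact (le_max_left c 0).trans_lt ((lt_div_iff₀ hs).2 hlt)
  · filter_upwards [hpos, eventually_ge_atTop 0] with s hs hs₀
    exact ((div_le_iff₀ hs).2 (integral_rpow_add_one_le hμ hs₀)).trans_lt hbc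

end RpowMoments

lemma integral_rpow_map_inv {μ : Measure ℝ} (hμ : ∀ᵐ x ∂μ, 0 ≤ x) (s : ℝ) :
    ∫ x, x ^ s ∂(μ.map (·⁻¹)) = ∫ x, x ^ (-s) ∂μ := by
  rw [integral_map (by fun_prop) (by fun_prop)]
  refine integral_congr_ae ?_
  filter_upwards [hμ] with x hx
  rw [Real.inv_rpow hx, Real.rpow_neg hx]

lemma mem_support_map_of_continuousAt {X Y : Type*} [TopologicalSpace X] [MeasurableSpace X]
    [TopologicalSpace Y] [MeasurableSpace Y] {μ : Measure X} {f : X → Y} {x : X}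
    (hf : AEMeasurable f μ) (hfx : ContinuousAt f x) (hx : x ∈ μ.support) :
    f x ∈ (μ.map f).support :=
  (Measure.mem_support_iff_forall _).2 fun _ hU ↦
    ((Measure.mem_support_iff_forall x).1 hx _ (hfx hU)).trans_le (Measure.le_map_apply hf _)

theorem tendsto_integral_rpow_add_one_div_atBot {μ : Measure ℝ} [IsFiniteMeasure μ] {a : ℝ}
    (ha₀ : 0 < a) (hμ : ∀ᵐ x ∂μ, a ≤ x) (ha : a ∈ μ.support) :
    Tendsto (fun s : ℝ ↦ (∫ x, x ^ (s + 1) ∂μ) / ∫ x, x ^ s ∂μ) atBot (𝓝 a) := by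
  have hmem : ∀ᵐ y ∂(μ.map (·⁻¹)), y ∈ Icc 0 a⁻¹ := by
    refine (ae_map_iff (by fun_prop) measurableSet_Icc).2 ?_
    filter_upwards [hμ] with x hx
    exact ⟨inv_nonneg.2 (ha₀.le.trans hx), inv_anti₀ ha₀ hx⟩
  have hsupp : a⁻¹ ∈ (μ.map (·⁻¹)).support :=
    mem_support_map_of_continuousAt (by fun_prop) (continuousAt_inv₀ ha₀.ne') ha
  have hlim := ((tendsto_integral_rpow_add_one_div_atTop (inv_pos.2 ha₀) hmem hsupp).inv₀
    (inv_ne_zero ha₀.ne')).comp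
      (tendsto_atTop_add_const_right atBot (-1) tendsto_neg_atBot_atTop)
  rw [inv_inv] at hlim
  refine hlim.congr fun s ↦ ?_
  have hnonneg : ∀ᵐ x ∂μ, 0 ≤ x := hμ.mono fun _ ↦ ha₀.le.trans
  simp only [Function.comp_apply, integral_rpow_map_inv hnonneg, inv_div]
  ring_nf

lemma mem_support_withDensity_restrict {X : Type*} [TopologicalSpace X] [MeasurableSpace X]
    {μ : Measure X} [μ.IsOpenPosMeasure] {s : Set X} {f : X → ℝ≥0∞} {x : X}
    (hf : AEMeasurable f (μ.restrict s)) (hxs : x ∈ closure (interior s))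
    (hfx : ContinuousWithinAt f s x) (hx : f x ≠ 0) :
    x ∈ ((μ.restrict s).withDensity f).support := by
  refine (Measure.mem_support_iff_forall x).2 fun U hU ↦ pos_iff_ne_zero.2 fun hzero ↦ ?_
  obtain ⟨V, hVU, hV, hxV⟩ := mem_nhds_iff.1 <| inter_mem hU <|
    mem_nhdsWithin_iff_eventually.1 <| hfx.eventually_ne hx
  have hnull : μ.restrict s ({y | f y ≠ 0} ∩ U) = 0 := (withDensity_apply_eq_zero' hf).1 hzero
  have hsub : V ∩ interior s ⊆ ({y | f y ≠ 0} ∩ U) ∩ s := fun y hy ↦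
    ⟨⟨(hVU hy.1).2 (interior_subset hy.2), (hVU hy.1).1⟩, interior_subset hy.2⟩
  exact ((hV.inter isOpen_interior).measure_pos μ (mem_closure_iff.1 hxs V hV hxV)).ne'
    (measure_mono_null hsub (le_antisymm ((Measure.le_restrict_apply _ _).trans hnull.le) zero_le))

/-- The measure `F(x) dx` on `[a, b]`, so that the Mellin transform of `F` at `ρ` is the moment
of order `ρ - 1` of this measure. Negative values of `F` are truncated to `0`. -/
noncomputable def weightMeasure (F : ℝ → ℝ) (a b : ℝ) : Measure ℝ :=
  (volume.restrict (Icc a b)).withDensity fun x ↦ ENNReal.ofReal (F x)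

section WeightMeasure

variable {F : ℝ → ℝ} {a b : ℝ}

lemma isFiniteMeasure_weightMeasure (hF : IntegrableOn F (Icc a b)) :
    IsFiniteMeasure (weightMeasure F a b) :=
  isFiniteMeasure_withDensity_ofReal hF.2

lemma ae_weightMeasure_mem_Icc (F : ℝ → ℝ) (a b : ℝ) :
    ∀ᵐ x ∂(weightMeasure F a b), x ∈ Icc a b :=
  (withDensity_absolutelyContinuous _ _).ae_le (ae_restrict_mem measurableSet_Icc)

lemma mem_support_weightMeasure {x : ℝ} (hab : a < b) (hF : ContinuousOn F (Icc a b))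
    (hx : x ∈ Icc a b) (hFx : 0 < F x) : x ∈ (weightMeasure F a b).support := by
  refine mem_support_withDensity_restrict (hF.aemeasurable measurableSet_Icc).ennreal_ofReal ?_
    (ENNReal.continuous_ofReal.continuousAt.comp_continuousWithinAt (hF x hx))
    (ENNReal.ofReal_pos.2 hFx).ne'
  rwa [interior_Icc, closure_Ioo hab.ne]

lemma integral_weightMeasure (hab : a ≤ b) (hF : AEMeasurable F (volume.restrict (Icc a b)))
    (hF₀ : ∀ x ∈ Icc a b, 0 ≤ F x) (g : ℝ → ℝ) :
    ∫ x, g x ∂(weightMeasure F a b) = ∫ x in a..b, F x * g x := by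
  rw [weightMeasure, integral_withDensity_eq_integral_toReal_smul₀ hF.ennreal_ofReal
    (.of_forall fun _ ↦ ENNReal.ofReal_lt_top), intervalIntegral.integral_of_le hab,
    ← integral_Icc_eq_integral_Ioc]
  refine setIntegral_congr_fun measurableSet_Icc fun x hx ↦ ?_
  simp only [ENNReal.toReal_ofReal (hF₀ x hx), smul_eq_mul]

end WeightMeasure

theorem stmt_7_general (μ : Measure ℝ) [IsFiniteMeasure μ] (α β : ℝ) (hα : 0 < α)
    (hμ : ∀ᵐ x ∂μ, x ∈ Icc α β) (hμα : α ∈ μ.support) (hμβ : β ∈ μ.support)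
    (Fhat : ℝ → ℝ) (hFhat : ∀ ρ : ℝ, Fhat ρ = ∫ x, x ^ (ρ - 1) ∂μ)
    (ψ : ℝ → ℝ) (hψ : ∀ ρ : ℝ, ψ ρ = Fhat (ρ + 1) / Fhat ρ) :
    Tendsto ψ atTop (𝓝 β) ∧ Tendsto ψ atBot (𝓝 α) := by
  have hψ_eq (ρ : ℝ) : (∫ x, x ^ (ρ - 1 + 1) ∂μ) / ∫ x, x ^ (ρ - 1) ∂μ = ψ ρ := by
    rw [hψ, hFhat, hFhat, add_sub_right_comm]
  have hαβ : α ≤ β := (Measure.support_subset_of_isClosed isClosed_Icc hμ hμα).2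
  constructor
  · exact ((tendsto_integral_rpow_add_one_div_atTop (hα.trans_le hαβ)
      (hμ.mono fun _ hx ↦ ⟨hα.le.trans hx.1, hx.2⟩) hμβ).comp
        (tendsto_atTop_add_const_right atTop (-1) tendsto_id)).congr hψ_eq
  · exact ((tendsto_integral_rpow_add_one_div_atBot hα (hμ.mono fun _ hx ↦ hx.1) hμα).comp
      (tendsto_atBot_add_const_right atBot (-1) tendsto_id)).congr hψ_eq

/-- For `0 < α < β < ∞` and `F : [α,β] → [0,∞)` continuous with `F(α) > 0` and
`F(β) > 0`, the ratio `ψ(ρ) = F̂(ρ+1)/F̂(ρ)` of Mellin transforms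
`F̂(ρ) = ∫_α^β F(x) x^{ρ-1} dx` satisfies `lim_{ρ→+∞} ψ(ρ) = β` and
`lim_{ρ→-∞} ψ(ρ) = α`. -/
theorem stmt_7 (α β : ℝ) (hα : 0 < α) (hαβ : α < β) (F : ℝ → ℝ)
    (hF : ContinuousOn F (Icc α β)) (hF0 : ∀ x ∈ Icc α β, 0 ≤ F x)
    (hFα : 0 < F α) (hFβ : 0 < F β)
    (Fhat : ℝ → ℝ) (hFhat : ∀ ρ : ℝ, Fhat ρ = ∫ x in α..β, F x * x ^ (ρ - 1))
    (ψ : ℝ → ℝ) (hψ : ∀ ρ : ℝ, ψ ρ = Fhat (ρ + 1) / Fhat ρ) :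
    Tendsto ψ atTop (nhds β) ∧ Tendsto ψ atBot (nhds α) := by
  have := isFiniteMeasure_weightMeasure hF.integrableOn_Icc
  refine stmt_7_general (weightMeasure F α β) α β hα (ae_weightMeasure_mem_Icc F α β)
    (mem_support_weightMeasure hαβ hF (left_mem_Icc.2 hαβ.le) hFα)
    (mem_support_weightMeasure hαβ hF (right_mem_Icc.2 hαβ.le) hFβ) Fhat (fun ρ ↦ ?_) ψ hψ
  rw [hFhat, integral_weightMeasure hαβ.le (hF.aemeasurable measurableSet_Icc) hF0]
end

section
/- Let σ > 0 be real and n ≥ 1 an integer, and define G(ρ) = ∫_{-∞}^{+∞} exp(-σ t^{2n} + ρ t) dt for ρ ∈ ℝ. Then the ratio G(ρ+1)/G(ρ) tends to +∞ as ρ → +∞ and tends to 0 as ρ → -∞. -/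
open MeasureTheory Filter

/-!
Up to the constant `G 0`, the function `G` is the moment generating function of the probability
measure with density proportional to `exp (-σ t ^ (2 * n))`. For any `X` which is not essentially
bounded above, the Chernoff bound at a level above `M` shows that `exp (ρ M)` is negligible
compared with `mgf X μ ρ`, so for large `ρ` the mass of `exp (ρ X)` sits on `{X > M}`, where raising
`ρ` by `h` multiplies the integrand by at least `exp (h M)`. As `M` is arbitrary, the ratio tends to
`+∞`. The limit at `-∞` is the same fact for `-X`, inverted.
-/

section MomentGeneratingFunction

open ProbabilityTheory

variable {Ω : Type*} {mΩ : MeasurableSpace Ω} {μ : Measure Ω} {X f : Ω → ℝ} {h : ℝ}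

lemma exp_mul_mgf_sub_le_mgf_add [IsFiniteMeasure μ] {ρ : ℝ} (M : ℝ) (hρ : 0 ≤ ρ) (hh : 0 ≤ h)
    (hint : Integrable (fun ω ↦ Real.exp (ρ * X ω)) μ)
    (hint_add : Integrable (fun ω ↦ Real.exp ((ρ + h) * X ω)) μ) :
    Real.exp (h * M) * (mgf X μ ρ - μ.real Set.univ * Real.exp (ρ * M)) ≤ mgf X μ (ρ + h) := by
  have pointwise (x : ℝ) :
      Real.exp (h * M) * (Real.exp (ρ * x) - Real.exp (ρ * M)) ≤ Real.exp ((ρ + h) * x) := by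
    rcases le_total M x with hMx | hxM
    · calc Real.exp (h * M) * (Real.exp (ρ * x) - Real.exp (ρ * M))
        _ ≤ Real.exp (h * M) * Real.exp (ρ * x) := by
          gcongr
          exact sub_le_self _ (Real.exp_pos _).le
        _ ≤ Real.exp (h * x) * Real.exp (ρ * x) := by gcongr
        _ = Real.exp ((ρ + h) * x) := by rw [← Real.exp_add]; ring_nf
    · have : Real.exp (ρ * x) ≤ Real.exp (ρ * M) := by gcongr
      exact (mul_nonpos_of_nonneg_of_nonpos (Real.exp_pos _).le (sub_nonpos.2 this)).trans
        (Real.exp_pos _).le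
  have hint_sub := hint.sub (integrable_const (Real.exp (ρ * M)))
  calc Real.exp (h * M) * (mgf X μ ρ - μ.real Set.univ * Real.exp (ρ * M))
    _ = ∫ ω, Real.exp (h * M) * (Real.exp (ρ * X ω) - Real.exp (ρ * M)) ∂μ := by
      rw [integral_const_mul, integral_sub hint (integrable_const _), integral_const, smul_eq_mul,
        mgf]
    _ ≤ mgf X μ (ρ + h) :=
      integral_mono (hint_sub.const_mul _) hint_add fun ω ↦ pointwise (X ω)

lemma tendsto_exp_mul_div_mgf_atTop [IsFiniteMeasure μ]
    (hint : ∀ᶠ ρ in atTop, Integrable (fun ω ↦ Real.exp (ρ * X ω)) μ) {M M' : ℝ} (hM : M < M')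
    (hX : μ {ω | M' ≤ X ω} ≠ 0) :
    Tendsto (fun ρ ↦ Real.exp (ρ * M) / mgf X μ ρ) atTop (nhds 0) := by
  have hμ : μ ≠ 0 := by rintro rfl; simp at hX
  have htail : 0 < μ.real {ω | M' ≤ X ω} := ENNReal.toReal_pos hX (measure_ne_top _ _)
  have hdecay : Tendsto (fun ρ : ℝ ↦ Real.exp (ρ * (M - M')) / μ.real {ω | M' ≤ X ω}) atTop
      (nhds 0) := by
    simpa using (Real.tendsto_exp_atBot.comp
      (tendsto_id.atTop_mul_const_of_neg (sub_neg.2 hM))).div_const (μ.real {ω | M' ≤ X ω})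
  refine squeeze_zero' (.of_forall fun ρ ↦ div_nonneg (Real.exp_pos _).le mgf_nonneg) ?_ hdecay
  filter_upwards [hint, eventually_ge_atTop 0] with ρ hintρ hρ
  rw [div_le_div_iff₀ (mgf_pos' hμ hintρ) htail]
  calc Real.exp (ρ * M) * μ.real {ω | M' ≤ X ω}
    _ ≤ Real.exp (ρ * M) * (Real.exp (-ρ * M') * mgf X μ ρ) := by
      gcongr
      exact measure_ge_le_exp_mul_mgf M' hρ hintρ
    _ = Real.exp (ρ * (M - M')) * mgf X μ ρ := by
      rw [← mul_assoc, ← Real.exp_add]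
      ring_nf

theorem tendsto_mgf_add_div_mgf_atTop [IsFiniteMeasure μ] (hh : 0 < h)
    (hint : ∀ᶠ ρ in atTop, Integrable (fun ω ↦ Real.exp (ρ * X ω)) μ)
    (hX : ∀ M, μ {ω | M ≤ X ω} ≠ 0) :
    Tendsto (fun ρ ↦ mgf X μ (ρ + h) / mgf X μ ρ) atTop atTop := by
  have hμ : μ ≠ 0 := by rintro rfl; simp at hX
  refine tendsto_atTop.2 fun b ↦ ?_
  obtain ⟨M, hbM⟩ : ∃ M, b < Real.exp (h * M) :=
    ⟨b / h, by rw [mul_div_cancel₀ b hh.ne']; linarith [Real.add_one_le_exp b]⟩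
  have hlower : Tendsto (fun ρ ↦ Real.exp (h * M) *
      (1 - μ.real Set.univ * (Real.exp (ρ * M) / mgf X μ ρ))) atTop (nhds (Real.exp (h * M))) := by
    simpa using (((tendsto_exp_mul_div_mgf_atTop hint (lt_add_one M) (hX _)).const_mul
      (μ.real Set.univ)).const_sub 1).const_mul (Real.exp (h * M))
  filter_upwards [hlower.eventually_const_lt hbM, hint,
    (tendsto_atTop_add_const_right _ h tendsto_id).eventually hint, eventually_ge_atTop 0]
    with ρ hb hintρ hintρh hρ
  have hpos : 0 < mgf X μ ρ := mgf_pos' hμ hintρ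
  calc b
    _ ≤ Real.exp (h * M) * (1 - μ.real Set.univ * (Real.exp (ρ * M) / mgf X μ ρ)) := hb.le
    _ = Real.exp (h * M) * (mgf X μ ρ - μ.real Set.univ * Real.exp (ρ * M)) / mgf X μ ρ := by
      field_simp
    _ ≤ mgf X μ (ρ + h) / mgf X μ ρ := by
      gcongr
      exact exp_mul_mgf_sub_le_mgf_add M hρ hh.le hintρ hintρh

theorem tendsto_mgf_add_div_mgf_atBot [IsFiniteMeasure μ] (hh : 0 < h)
    (hint : ∀ᶠ ρ in atBot, Integrable (fun ω ↦ Real.exp (ρ * X ω)) μ)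
    (hX : ∀ M, μ {ω | X ω ≤ M} ≠ 0) :
    Tendsto (fun ρ ↦ mgf X μ (ρ + h) / mgf X μ ρ) atBot (nhds 0) := by
  have hneg : Tendsto (fun ρ ↦ mgf (-X) μ (ρ + h) / mgf (-X) μ ρ) atTop atTop := by
    refine tendsto_mgf_add_div_mgf_atTop hh ?_ fun M ↦ ?_
    · simpa using tendsto_neg_atTop_atBot.eventually hint
    · simpa [le_neg] using hX (-M)
  have hshift : Tendsto (fun ρ : ℝ ↦ -ρ + -h) atBot atTop :=
    tendsto_atTop_add_const_right _ _ tendsto_neg_atBot_atTop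
  refine (hneg.comp hshift).inv_tendsto_atTop.congr fun ρ ↦ ?_
  simp [mgf_neg, add_comm]

lemma mgf_tilted (ρ : ℝ) :
    mgf X (μ.tilted f) ρ =
      (∫ ω, Real.exp (f ω + ρ * X ω) ∂μ) / ∫ ω, Real.exp (f ω) ∂μ :=
  integral_exp_tilted f (fun ω ↦ ρ * X ω)

lemma integrable_exp_mul_tilted_iff (hf : Integrable (fun ω ↦ Real.exp (f ω)) μ) (ρ : ℝ) :
    Integrable (fun ω ↦ Real.exp (ρ * X ω)) (μ.tilted f) ↔
      Integrable (fun ω ↦ Real.exp (f ω + ρ * X ω)) μ := by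
  simp only [integrable_tilted_iff hf, smul_eq_mul, Real.exp_add]

lemma mgf_tilted_div_mgf_tilted [NeZero μ] (hf : Integrable (fun ω ↦ Real.exp (f ω)) μ)
    (ρ ρ' : ℝ) :
    mgf X (μ.tilted f) ρ / mgf X (μ.tilted f) ρ' =
      (∫ ω, Real.exp (f ω + ρ * X ω) ∂μ) / ∫ ω, Real.exp (f ω + ρ' * X ω) ∂μ := by
  rw [mgf_tilted, mgf_tilted, div_div_div_cancel_right₀ (integral_exp_pos hf).ne']

theorem tendsto_integral_exp_add_mul_div_atTop (hh : 0 < h)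
    (hf : Integrable (fun ω ↦ Real.exp (f ω)) μ)
    (hint : ∀ᶠ ρ in atTop, Integrable (fun ω ↦ Real.exp (f ω + ρ * X ω)) μ)
    (hX : ∀ M, μ {ω | M ≤ X ω} ≠ 0) :
    Tendsto (fun ρ ↦ (∫ ω, Real.exp (f ω + (ρ + h) * X ω) ∂μ) /
      ∫ ω, Real.exp (f ω + ρ * X ω) ∂μ) atTop atTop := by
  have : NeZero μ := ⟨by rintro rfl; simp at hX⟩
  have := isProbabilityMeasure_tilted hf
  simp only [← mgf_tilted_div_mgf_tilted hf]
  exact tendsto_mgf_add_div_mgf_atTop hh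
    (hint.mono fun ρ ↦ (integrable_exp_mul_tilted_iff hf ρ).2)
    fun M hM ↦ hX M (absolutelyContinuous_tilted hf hM)

theorem tendsto_integral_exp_add_mul_div_atBot (hh : 0 < h)
    (hf : Integrable (fun ω ↦ Real.exp (f ω)) μ)
    (hint : ∀ᶠ ρ in atBot, Integrable (fun ω ↦ Real.exp (f ω + ρ * X ω)) μ)
    (hX : ∀ M, μ {ω | X ω ≤ M} ≠ 0) :
    Tendsto (fun ρ ↦ (∫ ω, Real.exp (f ω + (ρ + h) * X ω) ∂μ) /
      ∫ ω, Real.exp (f ω + ρ * X ω) ∂μ) atBot (nhds 0) := by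
  have : NeZero μ := ⟨by rintro rfl; simp at hX⟩
  have := isProbabilityMeasure_tilted hf
  simp only [← mgf_tilted_div_mgf_tilted hf]
  exact tendsto_mgf_add_div_mgf_atBot hh
    (hint.mono fun ρ ↦ (integrable_exp_mul_tilted_iff hf ρ).2)
    fun M hM ↦ hX M (absolutelyContinuous_tilted hf hM)

end MomentGeneratingFunction

lemma integrable_exp_neg_mul_sq_add_mul_add {σ : ℝ} (hσ : 0 < σ) (b c : ℝ) :
    Integrable (fun t : ℝ ↦ Real.exp (-σ * t ^ 2 + b * t + c)) := by
  have hre : (-σ : ℂ).re < 0 := by simpa using hσ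
  refine (integrable_cexp_quadratic' hre b c).norm.congr (.of_forall fun t ↦ ?_)
  simp only [Complex.norm_exp]
  norm_cast

lemma sub_one_le_pow {R : Type*} [Ring R] [LinearOrder R] [IsOrderedRing R] {x : R}
    (hx : 0 ≤ x) {n : ℕ} (hn : n ≠ 0) : x - 1 ≤ x ^ n := by
  rcases le_total 1 x with h1x | hx1
  · exact (sub_le_self x zero_le_one).trans (le_self_pow₀ h1x hn)
  · exact (sub_nonpos.2 hx1).trans (pow_nonneg hx n)

lemma integrable_exp_neg_mul_even_pow_add_mul {σ : ℝ} (hσ : 0 < σ) {n : ℕ} (hn : n ≠ 0)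
    (ρ : ℝ) :
    Integrable (fun t : ℝ ↦ Real.exp (-σ * t ^ (2 * n) + ρ * t)) := by
  refine (integrable_exp_neg_mul_sq_add_mul_add hσ ρ σ).mono' (by fun_prop)
    (.of_forall fun t ↦ ?_)
  have hpow : σ * (t ^ 2 - 1) ≤ σ * t ^ (2 * n) := by
    rw [pow_mul]
    gcongr
    exact sub_one_le_pow (sq_nonneg t) hn
  rw [Real.norm_of_nonneg (Real.exp_pos _).le, Real.exp_le_exp]
  linarith

/-- For `σ > 0`, an integer `n ≥ 1`, and
`G(ρ) = ∫_{-∞}^{∞} exp(-σ t^{2n} + ρ t) dt`, the ratio `G(ρ+1)/G(ρ)` tends to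
`+∞` as `ρ → +∞` and tends to `0` as `ρ → -∞`. -/
theorem stmt_11 (σ : ℝ) (hσ : 0 < σ) (n : ℕ) (hn : 1 ≤ n) (G : ℝ → ℝ)
    (hG : ∀ ρ : ℝ, G ρ = ∫ t : ℝ, Real.exp (-σ * t ^ (2 * n) + ρ * t)) :
    Tendsto (fun ρ : ℝ => G (ρ + 1) / G ρ) atTop atTop ∧
      Tendsto (fun ρ : ℝ => G (ρ + 1) / G ρ) atBot (nhds 0) := by
  have hint := integrable_exp_neg_mul_even_pow_add_mul hσ (Nat.one_le_iff_ne_zero.1 hn)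
  have hweight : Integrable fun t : ℝ ↦ Real.exp (-σ * t ^ (2 * n)) := by simpa using hint 0
  have hupper (M : ℝ) : volume {t : ℝ | M ≤ t} ≠ 0 := by
    change volume (Set.Ici M) ≠ 0
    simp
  have hlower (M : ℝ) : volume {t : ℝ | t ≤ M} ≠ 0 := by
    change volume (Set.Iic M) ≠ 0
    simp
  simp only [hG]
  exact ⟨tendsto_integral_exp_add_mul_div_atTop one_pos hweight (.of_forall hint) hupper,
    tendsto_integral_exp_add_mul_div_atBot one_pos hweight (.of_forall hint) hlower⟩
end

section
/- Let β > 0 and ρ > 0 be real, and set F̂(ρ) = ∫_0^β exp(1/(x-β)) x^{ρ-1} dx. Then ρ · F̂(ρ) = Σ_{n=0}^{∞} (n+1) β^{-(n+2)} F̂(ρ+n+1). -/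
open MeasureTheory Real

open Set Filter Topology
open scoped Nat

/-!
The weight `F x = exp (1 / (x - β))` satisfies `F' x = -F x / (β - x) ^ 2` and tends to `0` at `β`
faster than every power of `β - x`. Integrating `F x * x ^ (ρ - 1)` by parts therefore leaves no
boundary terms and gives `ρ * F̂ ρ = ∫ F x * (β - x)⁻² * x ^ ρ`. Expanding `(β - x)⁻²` as a power
series in `x`, whose coefficients are nonnegative, allows termwise integration.
-/

lemma hasSum_succ_mul_zpow_mul_pow {𝕜 : Type*} [NormedField 𝕜] {b x : 𝕜} (hxb : ‖x‖ < ‖b‖) :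
    HasSum (fun n : ℕ ↦ ((n : 𝕜) + 1) * b ^ (-((n : ℤ) + 2)) * x ^ n) ((b - x) ^ 2)⁻¹ := by
  have hb : b ≠ 0 := norm_pos_iff.1 ((norm_nonneg x).trans_lt hxb)
  have hsub : b - x ≠ 0 := sub_ne_zero.2 fun h ↦ hxb.ne' (congrArg norm h)
  have hratio : ‖x / b‖ < 1 := by rwa [norm_div, div_lt_one (norm_pos_iff.2 hb)]
  have hzpow (n : ℕ) : b ^ (-((n : ℤ) + 2)) = (b ^ n * b ^ 2)⁻¹ := by
    rw [zpow_neg, ← pow_add]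
    norm_cast
  have hgeom := (hasSum_choose_mul_geometric_of_norm_lt_one 1 hratio).mul_left (b ^ 2)⁻¹
  convert! hgeom using 1
  · ext n
    rw [hzpow, Nat.choose_one_right, div_pow]
    push_cast
    field_simp
  · rw [one_sub_div hb, one_add_one_eq_two, div_pow]
    field_simp

lemma hasSum_integral_of_nonneg {α ι : Type*} [MeasurableSpace α] [Countable ι] {μ : Measure α}
    {f : ι → α → ℝ} {g : α → ℝ} (hf_meas : ∀ i, AEStronglyMeasurable (f i) μ)
    (hf_nonneg : ∀ i, 0 ≤ᵐ[μ] f i) (hsum : ∀ᵐ x ∂μ, HasSum (f · x) (g x))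
    (hg : Integrable g μ) :
    HasSum (fun i ↦ ∫ x, f i x ∂μ) (∫ x, g x ∂μ) := by
  refine hasSum_integral_of_dominated_convergence f hf_meas (fun i ↦ ?_)
    (hsum.mono fun x hx ↦ hx.summable) (hg.congr (hsum.mono fun x hx ↦ hx.tsum_eq.symm)) hsum
  filter_upwards [hf_nonneg i] with x hx
  exact (norm_of_nonneg hx).le

lemma hasSum_mul_integral_mul_rpow {μ : Measure ℝ} {a : ℕ → ℝ} {F G : ℝ → ℝ} {ρ : ℝ}
    (ha : ∀ n, 0 ≤ a n) (hF_meas : AEStronglyMeasurable F μ) (hF : 0 ≤ᵐ[μ] F)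
    (hpos : ∀ᵐ x ∂μ, 0 < x) (hG : ∀ᵐ x ∂μ, HasSum (fun n ↦ a n * x ^ n) (G x))
    (hint : Integrable (fun x ↦ F x * G x * x ^ ρ) μ) :
    HasSum (fun n : ℕ ↦ a n * ∫ x, F x * x ^ (ρ + n) ∂μ) (∫ x, F x * G x * x ^ ρ ∂μ) := by
  simp_rw [← integral_const_mul]
  refine hasSum_integral_of_nonneg (fun n ↦ ?_) (fun n ↦ ?_) ?_ hint
  · exact (hF_meas.mul (by fun_prop)).const_mul (a n)
  · filter_upwards [hF, hpos] with x hFx hx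
    exact mul_nonneg (ha n) (mul_nonneg hFx (rpow_nonneg hx.le _))
  · filter_upwards [hpos, hG] with x hx hGx
    convert! hGx.mul_left (F x * x ^ ρ) using 1
    · ext n
      rw [rpow_add hx, rpow_natCast]
      ring
    · ring

lemma mul_integral_mul_rpow_sub_one_eq_neg {F F' : ℝ → ℝ} {b ρ : ℝ} (hb : 0 < b)
    (hderiv : ∀ x ∈ Ioo 0 b, HasDerivAt F (F' x) x)
    (hF : IntegrableOn (fun x ↦ F x * x ^ (ρ - 1)) (Ioo 0 b))
    (hF' : IntegrableOn (fun x ↦ F' x * x ^ ρ) (Ioo 0 b))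
    (hzero : Tendsto (fun x ↦ F x * x ^ ρ) (𝓝[>] 0) (𝓝 0))
    (hend : Tendsto (fun x ↦ F x * x ^ ρ) (𝓝[<] b) (𝓝 0)) :
    ρ * ∫ x in Ioo 0 b, F x * x ^ (ρ - 1) = -∫ x in Ioo 0 b, F' x * x ^ ρ := by
  have hprod : ∀ x ∈ Ioo 0 b,
      HasDerivAt (fun x ↦ F x * x ^ ρ) (F' x * x ^ ρ + ρ * (F x * x ^ (ρ - 1))) x := by
    intro x hx
    refine ((hderiv x hx).mul (hasDerivAt_rpow_const (Or.inl hx.1.ne'))).congr_deriv ?_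
    ring
  have hint := hF'.add (hF.const_mul ρ)
  have hftc := intervalIntegral.integral_eq_sub_of_hasDerivAt_of_tendsto hb hprod
    ((intervalIntegrable_iff_integrableOn_Ioo_of_le hb.le).2 hint) hzero hend
  rw [intervalIntegral.integral_of_le hb.le, integral_Ioc_eq_integral_Ioo,
    integral_add hF' (hF.const_mul ρ), integral_const_mul] at hftc
  linarith

section Weight

variable {β : ℝ}

lemma hasDerivAt_exp_one_div_sub {x : ℝ} (hx : x ≠ β) :
    HasDerivAt (fun x ↦ exp (1 / (x - β))) (-(exp (1 / (x - β)) * ((β - x) ^ 2)⁻¹)) x := by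
  have hinv : HasDerivAt (fun x ↦ 1 / (x - β)) (-1 / (x - β) ^ 2) x := by
    simpa only [one_div] using! ((hasDerivAt_id x).sub_const β).inv (sub_ne_zero.2 hx)
  refine hinv.exp.congr_deriv ?_
  rw [sub_sq_comm β x]
  ring

lemma tendsto_exp_one_div_sub_nhdsLT (β : ℝ) :
    Tendsto (fun x ↦ exp (1 / (x - β))) (𝓝[<] β) (𝓝 0) := by
  have hsub : Tendsto (fun x ↦ x - β) (𝓝[<] β) (𝓝[<] 0) := by
    refine tendsto_nhdsWithin_iff.2 ⟨?_, ?_⟩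
    · exact (tendsto_sub_nhds_zero_iff.2 tendsto_id).mono_left nhdsWithin_le_nhds
    · filter_upwards [self_mem_nhdsWithin] with x hx using sub_neg.2 (mem_Iio.1 hx)
  simp only [one_div]
  exact tendsto_exp_atBot.comp (tendsto_inv_nhdsLT_zero.comp hsub)

lemma exp_one_div_sub_mul_inv_pow_le_factorial {x : ℝ} (hx : x < β) (k : ℕ) :
    exp (1 / (x - β)) * ((β - x) ^ k)⁻¹ ≤ k ! := by
  have hpos : 0 < β - x := sub_pos.2 hx
  have hpow : (β - x)⁻¹ ^ k ≤ exp (β - x)⁻¹ * k ! :=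
    (div_le_iff₀ (by positivity)).1 (pow_div_factorial_le_exp _ (inv_nonneg.2 hpos.le) k)
  rw [← neg_sub β x, one_div_neg_eq_neg_one_div, one_div, exp_neg, ← inv_pow]
  exact (inv_mul_le_iff₀ (exp_pos _)).2 hpow

lemma integrableOn_exp_one_div_sub_mul_inv_pow_mul_rpow (hβ : 0 < β) (k : ℕ) {s : ℝ}
    (hs : -1 < s) :
    IntegrableOn (fun x ↦ exp (1 / (x - β)) * ((β - x) ^ k)⁻¹ * x ^ s) (Ioo 0 β) := by
  have hrpow : IntegrableOn (fun x : ℝ ↦ x ^ s) (Ioo 0 β) :=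
    (intervalIntegral.integrableOn_Ioo_rpow_iff hβ).2 hs
  refine Integrable.mono' (hrpow.const_mul (k ! : ℝ))
    (Measurable.aestronglyMeasurable (by fun_prop)) ?_
  filter_upwards [ae_restrict_mem measurableSet_Ioo] with x ⟨hx0, hxβ⟩
  have : 0 < β - x := sub_pos.2 hxβ
  rw [norm_of_nonneg (by positivity)]
  exact mul_le_mul_of_nonneg_right (exp_one_div_sub_mul_inv_pow_le_factorial hxβ k)
    (rpow_nonneg hx0.le s)

lemma mul_integral_exp_one_div_sub_mul_rpow_sub_one (hβ : 0 < β) {ρ : ℝ} (hρ : 0 < ρ) :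
    ρ * ∫ x in Ioo 0 β, exp (1 / (x - β)) * x ^ (ρ - 1) =
      ∫ x in Ioo 0 β, exp (1 / (x - β)) * ((β - x) ^ 2)⁻¹ * x ^ ρ := by
  have hrpow (y : ℝ) : ContinuousAt (fun x : ℝ ↦ x ^ ρ) y :=
    continuousAt_rpow_const y ρ (Or.inr hρ.le)
  have hF : IntegrableOn (fun x ↦ exp (1 / (x - β)) * x ^ (ρ - 1)) (Ioo 0 β) := by
    simpa using integrableOn_exp_one_div_sub_mul_inv_pow_mul_rpow hβ 0 (s := ρ - 1) (by linarith)
  have hF' := integrableOn_exp_one_div_sub_mul_inv_pow_mul_rpow hβ 2 (s := ρ) (by linarith)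
  have hzero : Tendsto (fun x ↦ exp (1 / (x - β)) * x ^ ρ) (𝓝[>] 0) (𝓝 0) := by
    have hcont := (hasDerivAt_exp_one_div_sub hβ.ne).continuousAt.mul (hrpow 0)
    simpa [zero_rpow hρ.ne'] using! hcont.tendsto.mono_left nhdsWithin_le_nhds
  have hend : Tendsto (fun x ↦ exp (1 / (x - β)) * x ^ ρ) (𝓝[<] β) (𝓝 0) := by
    simpa using (tendsto_exp_one_div_sub_nhdsLT β).mul
      ((hrpow β).tendsto.mono_left nhdsWithin_le_nhds)
  have hparts := mul_integral_mul_rpow_sub_one_eq_neg hβ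
    (fun x hx ↦ hasDerivAt_exp_one_div_sub hx.2.ne) hF (by simpa using hF'.neg) hzero hend
  simpa only [neg_mul, integral_neg, neg_neg] using hparts

end Weight

/-- For `β > 0` and `ρ > 0`, with
`F̂(ρ) = ∫_0^β exp(1/(x-β)) x^{ρ-1} dx`:
`ρ F̂(ρ) = Σ_{n=0}^{∞} (n+1) β^{-(n+2)} F̂(ρ+n+1)`. -/
theorem stmt_17 (β : ℝ) (hβ : 0 < β) (Fhat : ℝ → ℝ)
    (hFhat : ∀ ρ : ℝ, Fhat ρ = ∫ x in (0 : ℝ)..β, Real.exp (1 / (x - β)) * x ^ (ρ - 1)) :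
    ∀ ρ : ℝ, 0 < ρ →
      ρ * Fhat ρ =
        ∑' n : ℕ, ((n : ℝ) + 1) * β ^ (-((n : ℤ) + 2)) * Fhat (ρ + n + 1) := by
  intro ρ hρ
  have hIoo (s : ℝ) : Fhat s = ∫ x in Ioo 0 β, exp (1 / (x - β)) * x ^ (s - 1) := by
    rw [hFhat, intervalIntegral.integral_of_le hβ.le, integral_Ioc_eq_integral_Ioo]
  have hmem : ∀ᵐ x ∂volume.restrict (Ioo 0 β), x ∈ Ioo 0 β := ae_restrict_mem measurableSet_Ioo
  have hseries : ∀ᵐ x ∂volume.restrict (Ioo 0 β), HasSum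
      (fun n : ℕ ↦ ((n : ℝ) + 1) * β ^ (-((n : ℤ) + 2)) * x ^ n) ((β - x) ^ 2)⁻¹ := by
    filter_upwards [hmem] with x ⟨hx0, hxβ⟩
    exact hasSum_succ_mul_zpow_mul_pow
      (by rwa [norm_of_nonneg hx0.le, norm_of_nonneg hβ.le])
  have hsum := hasSum_mul_integral_mul_rpow (F := fun x ↦ exp (1 / (x - β)))
    (fun n ↦ by positivity) (Measurable.aestronglyMeasurable (by fun_prop))
    (ae_of_all _ fun x ↦ (exp_pos _).le)
    (hmem.mono fun x hx ↦ hx.1) hseries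
    (integrableOn_exp_one_div_sub_mul_inv_pow_mul_rpow hβ 2 (by linarith : -1 < ρ))
  simp only [hIoo, add_sub_cancel_right]
  rw [mul_integral_exp_one_div_sub_mul_rpow_sub_one hβ hρ, hsum.tsum_eq]
end

section
/- Let β > 0 and set F̂(ρ) = ∫_0^β exp(1/(x-β)) x^{ρ-1} dx for ρ > 0. Then lim_{ρ → +∞} F̂(ρ+1)/F̂(ρ) = β. -/
open MeasureTheory Filter Real

/-!
Let `M s = ∫ f ^ s ∂μ`, where `β` is the essential supremum of `f ≥ 0` and `μ` is finite. Then
`M (s + 1) ≤ β * M s`. For `0 < a < β`, integrating `a * f ^ s - a ^ (s + 1) ≤ f ^ (s + 1)` gives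
`a - a * μ univ * (a ^ s / M s) ≤ M (s + 1) / M s`, and `a ^ s / M s → 0` because `f` exceeds some
`b > a` on a set of positive measure. Hence `M (s + 1) / M s → β`. The Mellin transform of a weight
is the case where `f` is the identity and `μ` has that weight as density; all that matters of the
weight is that it has mass arbitrarily close to `β`, not how fast it decays there.
-/

section RpowMoments

variable {α : Type*} [MeasurableSpace α] {μ : Measure α} {f : α → ℝ} {a b β s : ℝ}

lemma integrable_rpow_of_ae_le [IsFiniteMeasure μ] (hf : AEMeasurable f μ)
    (hf_nonneg : 0 ≤ᵐ[μ] f) (hf_le : ∀ᵐ x ∂μ, f x ≤ β) (hs : 0 ≤ s) :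
    Integrable (fun x => f x ^ s) μ := by
  refine Integrable.of_bound (hf.pow_const s).aestronglyMeasurable (β ^ s) ?_
  filter_upwards [hf_nonneg, hf_le] with x hx_nonneg hx_le
  rw [norm_of_nonneg (rpow_nonneg hx_nonneg s)]
  exact rpow_le_rpow hx_nonneg hx_le hs

lemma rpow_mul_measureReal_lt_le_integral_rpow [IsFiniteMeasure μ] (hf_nonneg : 0 ≤ᵐ[μ] f)
    (hf_int : Integrable (fun x => f x ^ s) μ) (hb : 0 ≤ b) (hs : 0 ≤ s) :
    b ^ s * μ.real {x | b < f x} ≤ ∫ x, f x ^ s ∂μ :=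
  calc b ^ s * μ.real {x | b < f x}
      ≤ b ^ s * μ.real {x | b ^ s ≤ f x ^ s} :=
        mul_le_mul_of_nonneg_left
          (measureReal_mono fun _ hx => rpow_le_rpow hb (le_of_lt hx) hs) (rpow_nonneg hb s)
    _ ≤ ∫ x, f x ^ s ∂μ :=
        mul_meas_ge_le_integral_of_nonneg
          (hf_nonneg.mono fun _ hx => rpow_nonneg hx s) hf_int _

lemma integral_rpow_pos [IsFiniteMeasure μ] (hf_nonneg : 0 ≤ᵐ[μ] f)
    (hf_int : Integrable (fun x => f x ^ s) μ) (hb : 0 < b) (hμb : μ {x | b < f x} ≠ 0)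
    (hs : 0 ≤ s) : 0 < ∫ x, f x ^ s ∂μ :=
  (mul_pos (rpow_pos_of_pos hb s) (ENNReal.toReal_pos hμb (measure_ne_top μ _))).trans_le
    (rpow_mul_measureReal_lt_le_integral_rpow hf_nonneg hf_int hb.le hs)

lemma integral_rpow_add_one_le_s18 (hf_nonneg : 0 ≤ᵐ[μ] f) (hf_le : ∀ᵐ x ∂μ, f x ≤ β)
    (hf_int : Integrable (fun x => f x ^ s) μ) (hs : 0 ≤ s) :
    ∫ x, f x ^ (s + 1) ∂μ ≤ β * ∫ x, f x ^ s ∂μ := by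
  rw [← integral_const_mul]
  refine integral_mono_of_nonneg (hf_nonneg.mono fun x hx => rpow_nonneg hx _)
    (hf_int.const_mul β) ?_
  filter_upwards [hf_nonneg, hf_le] with x hx_nonneg hx_le
  rw [rpow_add_one' hx_nonneg (by positivity), mul_comm]
  exact mul_le_mul_of_nonneg_right hx_le (rpow_nonneg hx_nonneg s)

lemma mul_rpow_sub_rpow_add_one_le {y : ℝ} (ha : 0 ≤ a) (hy : 0 ≤ y) (hs : 0 ≤ s) :
    a * y ^ s - a ^ (s + 1) ≤ y ^ (s + 1) := by
  rw [rpow_add_one' ha (by positivity), rpow_add_one' hy (by positivity)]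
  have ha_pow : 0 ≤ a ^ s := rpow_nonneg ha s
  have hy_pow : 0 ≤ y ^ s := rpow_nonneg hy s
  rcases le_total a y with hay | hya
  · nlinarith [mul_le_mul_of_nonneg_right hay hy_pow]
  · nlinarith [mul_le_mul_of_nonneg_left (rpow_le_rpow hy hya hs) ha]

lemma mul_integral_rpow_sub_le [IsFiniteMeasure μ] (hf_nonneg : 0 ≤ᵐ[μ] f)
    (hf_int : Integrable (fun x => f x ^ s) μ)
    (hf_int_succ : Integrable (fun x => f x ^ (s + 1)) μ) (ha : 0 ≤ a) (hs : 0 ≤ s) :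
    a * ∫ x, f x ^ s ∂μ - a ^ (s + 1) * μ.real Set.univ ≤ ∫ x, f x ^ (s + 1) ∂μ :=
  calc a * ∫ x, f x ^ s ∂μ - a ^ (s + 1) * μ.real Set.univ
      = ∫ x, (a * f x ^ s - a ^ (s + 1)) ∂μ := by
        rw [integral_sub (hf_int.const_mul a) (integrable_const _), integral_const_mul,
          integral_const, smul_eq_mul, mul_comm (μ.real _)]
    _ ≤ ∫ x, f x ^ (s + 1) ∂μ :=
        integral_mono_ae ((hf_int.const_mul a).sub (integrable_const _)) hf_int_succ
          (hf_nonneg.mono fun _ hx => mul_rpow_sub_rpow_add_one_le ha hx hs)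

lemma tendsto_rpow_div_integral_rpow [IsFiniteMeasure μ] (hf_nonneg : 0 ≤ᵐ[μ] f)
    (hf_int : ∀ s : ℝ, 0 ≤ s → Integrable (fun x => f x ^ s) μ) (ha : 0 ≤ a) (hab : a < b)
    (hμb : μ {x | b < f x} ≠ 0) :
    Tendsto (fun s : ℝ => a ^ s / ∫ x, f x ^ s ∂μ) atTop (nhds 0) := by
  have hb : 0 < b := ha.trans_lt hab
  have hmass : 0 < μ.real {x | b < f x} := ENNReal.toReal_pos hμb (measure_ne_top μ _)
  have hgeom : Tendsto (fun s : ℝ => (a / b) ^ s / μ.real {x | b < f x}) atTop (nhds 0) := by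
    have hratio : -1 < a / b := neg_one_lt_zero.trans_le (div_nonneg ha hb.le)
    simpa only [zero_div] using
      (tendsto_rpow_atTop_of_base_lt_one _ hratio ((div_lt_one hb).2 hab)).div_const _
  refine tendsto_of_tendsto_of_tendsto_of_le_of_le' tendsto_const_nhds hgeom ?_ ?_
  · filter_upwards [eventually_ge_atTop 0] with s hs
    exact div_nonneg (rpow_nonneg ha s)
      (integral_rpow_pos hf_nonneg (hf_int s hs) hb hμb hs).le
  · filter_upwards [eventually_ge_atTop 0] with s hs
    rw [div_rpow ha hb.le, div_div]
    exact div_le_div_of_nonneg_left (rpow_nonneg ha s) (mul_pos (rpow_pos_of_pos hb s) hmass)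
      (rpow_mul_measureReal_lt_le_integral_rpow hf_nonneg (hf_int s hs) hb.le hs)

lemma eventually_lt_integral_rpow_ratio [IsFiniteMeasure μ] (hf_nonneg : 0 ≤ᵐ[μ] f)
    (hf_int : ∀ s : ℝ, 0 ≤ s → Integrable (fun x => f x ^ s) μ) (hb : 0 < b)
    (hμb : μ {x | b < f x} ≠ 0) {l : ℝ} (hlb : l < b) :
    ∀ᶠ s : ℝ in atTop, l < (∫ x, f x ^ (s + 1) ∂μ) / ∫ x, f x ^ s ∂μ := by
  obtain ⟨a, hla, hab⟩ := exists_between (max_lt hlb hb)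
  obtain ⟨hl, ha⟩ := max_lt_iff.1 hla
  have hlower : Tendsto (fun s : ℝ => a - a * μ.real Set.univ * (a ^ s / ∫ x, f x ^ s ∂μ))
      atTop (nhds a) := by
    simpa only [mul_zero, sub_zero] using
      ((tendsto_rpow_div_integral_rpow hf_nonneg hf_int ha.le hab hμb).const_mul
        (a * μ.real Set.univ)).const_sub a
  filter_upwards [hlower.eventually_const_lt hl, eventually_ge_atTop 0] with s hls hs
  have hpos := integral_rpow_pos hf_nonneg (hf_int s hs) hb hμb hs
  refine hls.trans_le ((le_div_iff₀ hpos).2 ?_)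
  calc (a - a * μ.real Set.univ * (a ^ s / ∫ x, f x ^ s ∂μ)) * ∫ x, f x ^ s ∂μ
      = a * ∫ x, f x ^ s ∂μ - a ^ (s + 1) * μ.real Set.univ := by
        rw [rpow_add_one ha.ne']
        field_simp
    _ ≤ ∫ x, f x ^ (s + 1) ∂μ :=
        mul_integral_rpow_sub_le hf_nonneg (hf_int s hs) (hf_int (s + 1) (by positivity)) ha.le hs

theorem tendsto_integral_rpow_ratio [IsFiniteMeasure μ] (hf : AEMeasurable f μ)
    (hf_nonneg : 0 ≤ᵐ[μ] f) (hf_le : ∀ᵐ x ∂μ, f x ≤ β) (hβ : 0 < β)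
    (hμ : ∀ b < β, μ {x | b < f x} ≠ 0) :
    Tendsto (fun s : ℝ => (∫ x, f x ^ (s + 1) ∂μ) / ∫ x, f x ^ s ∂μ) atTop (nhds β) := by
  have hf_int : ∀ s : ℝ, 0 ≤ s → Integrable (fun x => f x ^ s) μ :=
    fun s hs => integrable_rpow_of_ae_le hf hf_nonneg hf_le hs
  refine tendsto_order.2 ⟨fun l hl => ?_, fun u hu => ?_⟩
  · obtain ⟨b, hlb, hbβ⟩ := exists_between (max_lt hl hβ)
    exact eventually_lt_integral_rpow_ratio hf_nonneg hf_int ((le_max_right l 0).trans_lt hlb)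
      (hμ b hbβ) ((le_max_left l 0).trans_lt hlb)
  · filter_upwards [eventually_ge_atTop 0] with s hs
    have hpos := integral_rpow_pos hf_nonneg (hf_int s hs) (half_pos hβ)
      (hμ _ (half_lt_self hβ)) hs
    exact ((div_le_iff₀ hpos).2
      (integral_rpow_add_one_le_s18 hf_nonneg hf_le (hf_int s hs) hs)).trans_lt hu

end RpowMoments

section Weight

variable {w : ℝ → ℝ} {β : ℝ}

lemma integral_withDensity_ofReal_restrict_Ioc (hβ : 0 ≤ β)
    (hw : IntervalIntegrable w volume 0 β) (hw_nonneg : ∀ x ∈ Set.Ioc 0 β, 0 ≤ w x) (g : ℝ → ℝ) :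
    ∫ x, g x ∂(volume.restrict (Set.Ioc 0 β)).withDensity (fun x => ENNReal.ofReal (w x)) =
      ∫ x in (0 : ℝ)..β, w x * g x := by
  rw [integral_withDensity_eq_integral_toReal_smul₀ hw.1.aemeasurable.ennreal_ofReal
    (ae_of_all _ fun _ => ENNReal.ofReal_lt_top), intervalIntegral.integral_of_le hβ]
  refine setIntegral_congr_fun measurableSet_Ioc fun x hx => ?_
  simp only [ENNReal.toReal_ofReal (hw_nonneg x hx), smul_eq_mul]

lemma withDensity_ofReal_restrict_Ioc_apply_Ioi {b : ℝ} (hw : IntervalIntegrable w volume 0 β)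
    (hw_nonneg : ∀ x ∈ Set.Ioc 0 β, 0 ≤ w x) (hb : b ∈ Set.Icc 0 β) :
    (volume.restrict (Set.Ioc 0 β)).withDensity (fun x => ENNReal.ofReal (w x)) (Set.Ioi b) =
      ENNReal.ofReal (∫ x in b..β, w x) := by
  have hsub : Set.Ioc b β ⊆ Set.Ioc 0 β := Set.Ioc_subset_Ioc_left hb.1
  have hinter : Set.Ioi b ∩ Set.Ioc 0 β = Set.Ioc b β := by
    rw [Set.inter_comm, Set.Ioc_inter_Ioi, max_eq_right hb.1]
  rw [withDensity_apply _ measurableSet_Ioi, Measure.restrict_restrict measurableSet_Ioi, hinter,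
    intervalIntegral.integral_of_le hb.2,
    ofReal_integral_eq_lintegral_ofReal (hw.1.mono_set hsub)]
  filter_upwards [ae_restrict_mem measurableSet_Ioc] with x hx using hw_nonneg x (hsub hx)

theorem tendsto_intervalIntegral_mul_rpow_ratio (hβ : 0 < β)
    (hw : IntervalIntegrable w volume 0 β) (hw_nonneg : ∀ x ∈ Set.Ioc 0 β, 0 ≤ w x)
    (hw_mass : ∀ b ∈ Set.Ico 0 β, 0 < ∫ x in b..β, w x) :
    Tendsto (fun s : ℝ => (∫ x in (0 : ℝ)..β, w x * x ^ (s + 1)) / ∫ x in (0 : ℝ)..β, w x * x ^ s)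
      atTop (nhds β) := by
  set μ := (volume.restrict (Set.Ioc 0 β)).withDensity fun x => ENNReal.ofReal (w x) with hμ_def
  have : IsFiniteMeasure μ := isFiniteMeasure_withDensity_ofReal hw.1.2
  have hμ_supp : ∀ᵐ x ∂μ, x ∈ Set.Ioc 0 β :=
    (withDensity_absolutelyContinuous _ _).ae_le (ae_restrict_mem measurableSet_Ioc)
  have hμ_mass : ∀ b < β, μ (Set.Ioi b) ≠ 0 := by
    intro b hb
    have hb_max : max b 0 ∈ Set.Ico 0 β := ⟨le_max_right b 0, max_lt hb hβ⟩
    have hpos : 0 < μ (Set.Ioi (max b 0)) := by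
      rw [withDensity_ofReal_restrict_Ioc_apply_Ioi hw hw_nonneg (Set.Ico_subset_Icc_self hb_max)]
      exact ENNReal.ofReal_pos.2 (hw_mass _ hb_max)
    exact (hpos.trans_le (measure_mono (Set.Ioi_subset_Ioi (le_max_left b 0)))).ne'
  simpa only [hμ_def, integral_withDensity_ofReal_restrict_Ioc hβ.le hw hw_nonneg] using
    tendsto_integral_rpow_ratio (f := fun x => x) aemeasurable_id (hμ_supp.mono fun _ hx => hx.1.le)
      (hμ_supp.mono fun _ hx => hx.2) hβ hμ_mass

end Weight

lemma intervalIntegrable_exp_one_div_sub {a b β : ℝ} (ha : a ≤ β) (hb : b ≤ β) :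
    IntervalIntegrable (fun x => exp (1 / (x - β))) volume a b := by
  rw [intervalIntegrable_iff]
  refine Measure.integrableOn_of_bounded (M := 1) measure_Ioc_lt_top.ne
    (Measurable.aestronglyMeasurable (by fun_prop)) ?_
  filter_upwards [ae_restrict_mem measurableSet_uIoc] with x hx
  rw [norm_of_nonneg (exp_nonneg _), exp_le_one_iff, one_div_nonpos, sub_nonpos]
  exact hx.2.trans (max_le ha hb)

/-- For `β > 0`, with `F̂(ρ) = ∫_0^β exp(1/(x-β)) x^{ρ-1} dx` (finite for
`ρ > 0`): `lim_{ρ → +∞} F̂(ρ+1)/F̂(ρ) = β`. -/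
theorem stmt_18 (β : ℝ) (hβ : 0 < β) (Fhat : ℝ → ℝ)
    (hFhat : ∀ ρ : ℝ, Fhat ρ = ∫ x in (0 : ℝ)..β, Real.exp (1 / (x - β)) * x ^ (ρ - 1)) :
    Tendsto (fun ρ : ℝ => Fhat (ρ + 1) / Fhat ρ) atTop (nhds β) := by
  have hmass : ∀ b ∈ Set.Ico 0 β, 0 < ∫ x in b..β, exp (1 / (x - β)) := fun b hb =>
    intervalIntegral.intervalIntegral_pos_of_pos
      (intervalIntegrable_exp_one_div_sub hb.2.le le_rfl) (fun _ => exp_pos _) hb.2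
  have hmoments := tendsto_intervalIntegral_mul_rpow_ratio hβ
    (intervalIntegrable_exp_one_div_sub hβ.le le_rfl) (fun _ _ => exp_nonneg _) hmass
  refine (hmoments.comp (tendsto_atTop_add_const_right atTop (-1) tendsto_id)).congr fun ρ => ?_
  simp only [hFhat, Function.comp_apply, id_eq, ← sub_eq_add_neg, sub_add_cancel,
    add_sub_cancel_right]
end
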